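/- arXiv:1302.2261 — 4 statements merged into one kernel-verified Lean document; each statement's English description precedes it below -/
import Mathlib

section
/- There is an absolute constant C > 0 such that for every prime power q and every ε ∈ (0,1) the following holds: for every γ > 0 there exists n₀ such that for all integers n ≥ n₀, setting k = ⌊ε²n/(C·log q)⌋, a uniformly random k-dimensional linear subspace C of F_q^n (viewed as a code of length n over F_q) is ((1 − 1/q)(1 − ε), ⌈4/ε²⌉)-list decodable with probability at least 1 − γ. -/
/-!
A random code is generated by a matrix with `n` independent uniform rows `x j ∈ F^k`; the `j`-th
symbol of the codeword of a message `m` is `x j ⬝ᵥ m`. If `L + 1` codewords lie within relative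
distance `(1 - 1/q)(1 - ε)` of a word, then counting agreements with this word coordinate by
coordinate shows that their list `t` of messages has total plurality
`∑ j, max_a #{m ∈ t | x j ⬝ᵥ m = a}` at least `n (L + 1) (1/q + (1 - 1/q) ε)`. Two estimates make
this unlikely for all `t` at once.

*Mean.* Distinct messages collide at a coordinate with probability `1/q`, so a second moment
computation bounds the mean plurality by `(L + 1) (1/q + (1 - 1/q) ε / 2)` once `L + 1 ≥ 4/ε²`.

*Fluctuations.* A union bound over the lists would be too expensive. Instead the exponential moment
of the supremum over `t` is treated one coordinate at a time: symmetrization introduces a random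
sign, and a contraction principle for the maximum replaces the signed plurality by
`∑ a, σ a * #{m ∈ t | x j ⬝ᵥ m = a} = ∑ m ∈ t, σ (x j ⬝ᵥ m)` with independent signs `σ a`. This
process is additive in `t`, hence is at most `L + 1` times its maximum over single messages, and a
union bound over only `q^k` messages suffices. By Markov's inequality the failure probability is at
most `q^k exp(-ε² n / 128)`.

Every `k`-dimensional subspace is the image of equally many injective encodings, and at least half
of all matrices are injective, so the bound transfers to uniformly random subspaces at the cost of
a factor `2`. The constant `C = 256` makes `q^k` at most `exp(ε² n / 256)`, half of the exponent.
-/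

open Finset
open scoped BigOperators Classical

noncomputable section

/-- The relative Hamming distance between two words of length `n`. -/
def relDist {n : ℕ} {α : Type*} [DecidableEq α] (x y : Fin n → α) : ℝ :=
  (hammingDist x y : ℝ) / n

/-- A set code `C ⊆ F^n` is `(ρ, L)`-list decodable: every received word `w` has at most `L`
codewords within relative Hamming distance `ρ`. -/
def listDecodableSet {n : ℕ} {F : Type*} [DecidableEq F]
    (C : Set (Fin n → F)) (ρ : ℝ) (L : ℕ) : Prop :=
  ∀ w : Fin n → F, Nat.card {c : Fin n → F // c ∈ C ∧ relDist c w ≤ ρ} ≤ L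

section Probability

variable {Ω ι : Type*} [Fintype Ω] [Fintype ι]

lemma convexOn_map_expect_le [Nonempty Ω] {φ : ℝ → ℝ} (hφ : ConvexOn ℝ Set.univ φ) (f : Ω → ℝ) :
    φ (𝔼 x, f x) ≤ 𝔼 x, φ (f x) := by
  have hcard : (Fintype.card Ω : ℝ) ≠ 0 := by positivity
  have h := hφ.map_sum_le (t := univ) (w := fun _ => (Fintype.card Ω : ℝ)⁻¹) (p := f)
    (fun _ _ => by positivity) (by simp [hcard]) (fun _ _ => Set.mem_univ _)
  simpa only [Fintype.expect_eq_sum_div_card, smul_eq_mul, inv_mul_eq_div, ← sum_div] using h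

lemma expect_prod_eq_expect_expect (f : Ω × ι → ℝ) : 𝔼 p, f p = 𝔼 x, 𝔼 y, f (x, y) := by
  rw [← univ_product_univ, expect_product]

lemma expect_fin_succ_pi {n : ℕ} (f : (Fin (n + 1) → Ω) → ℝ) :
    𝔼 x, f x = 𝔼 y : Fin n → Ω, 𝔼 a, f (Fin.cons a y) := by
  rw [← Fintype.expect_equiv (Fin.consEquiv fun _ : Fin (n + 1) => Ω)
    (fun p => f (Fin.cons p.1 p.2)) f fun _ => rfl, expect_prod_eq_expect_expect, expect_comm]

lemma expect_prod_pi (f : Ω → ℝ) (n : ℕ) :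
    𝔼 x : Fin n → Ω, ∏ j, f (x j) = (𝔼 x, f x) ^ n := by
  rw [expect_pow, Fintype.piFinset_univ]

/-- The probability of the event `P` for a uniformly random element of a finite type. -/
def prob (P : Ω → Prop) : ℝ := 𝔼 x, if P x then 1 else 0

variable {P Q : Ω → Prop}

lemma prob_eq_card_div (P : Ω → Prop) :
    prob P = (Nat.card {x // P x} : ℝ) / Fintype.card Ω := by
  rw [prob, Fintype.expect_eq_sum_div_card, sum_boole, Nat.card_eq_fintype_card,
    Fintype.card_subtype]

lemma prob_mono (h : ∀ x, P x → Q x) : prob P ≤ prob Q := by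
  refine expect_le_expect fun x _ => ?_
  by_cases hP : P x
  · simp [hP, h x hP]
  · simp only [hP, if_false]
    positivity

lemma prob_le_one (P : Ω → Prop) : prob P ≤ 1 := by
  rw [prob_eq_card_div, ← Nat.card_eq_fintype_card]
  exact div_le_one_of_le₀ (mod_cast Finite.card_subtype_le P) (by positivity)

lemma prob_nonneg (P : Ω → Prop) : 0 ≤ prob P :=
  expect_nonneg fun _ _ => by positivity

lemma prob_add_prob_not [Nonempty Ω] (P : Ω → Prop) : prob P + prob (fun x => ¬ P x) = 1 := by
  rw [prob, prob, ← expect_add_distrib]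
  refine (expect_congr rfl fun x _ => ?_).trans (Fintype.expect_const 1)
  by_cases hP : P x <;> simp [hP]

lemma prob_le_prob_and_add_prob_not (P Q : Ω → Prop) :
    prob P ≤ prob (fun x => P x ∧ Q x) + prob (fun x => ¬ Q x) := by
  rw [prob, prob, prob, ← expect_add_distrib]
  refine expect_le_expect fun x _ => ?_
  by_cases hP : P x <;> by_cases hQ : Q x <;> simp [hP, hQ]

lemma prob_exists_le_sum_prob (P : ι → Ω → Prop) :
    prob (fun x => ∃ i, P i x) ≤ ∑ i, prob (P i) := by
  simp only [prob, ← expect_sum_comm]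
  refine expect_le_expect fun x _ => ?_
  split_ifs with h
  · obtain ⟨i, hi⟩ := h
    calc (1 : ℝ) = if P i x then 1 else 0 := (if_pos hi).symm
      _ ≤ ∑ i, if P i x then 1 else 0 :=
        single_le_sum (f := fun i => if P i x then (1 : ℝ) else 0)
          (fun _ _ => by positivity) (mem_univ i)
  · positivity

lemma prob_forall_pi (P : Ω → Prop) (n : ℕ) :
    prob (fun x : Fin n → Ω => ∀ j, P (x j)) = prob P ^ n := by
  rw [prob, prob, ← expect_prod_pi]
  refine expect_congr rfl fun x _ => ?_
  rw [Fintype.prod_boole]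
  congr

lemma prob_mul_le_expect {f : Ω → ℝ} {c : ℝ} (hf : ∀ x, 0 ≤ f x) (h : ∀ x, P x → c ≤ f x) :
    prob P * c ≤ 𝔼 x, f x := by
  rw [prob, expect_mul]
  refine expect_le_expect fun x _ => ?_
  by_cases hP : P x
  · simpa [hP] using h x hP
  · simpa [hP] using hf x

lemma prob_map_eq_zero {G H : Type*} [AddGroup G] [Fintype G] [AddGroup H] [Fintype H]
    (φ : G →+ H) (hφ : Function.Surjective φ) :
    prob (fun x => φ x = 0) = 1 / Fintype.card H := by
  have hcard : Nat.card φ.ker * Fintype.card H = Fintype.card G := by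
    rw [← Nat.card_eq_fintype_card, ← Nat.card_eq_fintype_card, ← φ.ker.card_mul_index,
      AddSubgroup.index_ker, AddMonoidHom.range_eq_top_of_surjective φ hφ, AddSubgroup.card_top]
  have hker : Nat.card {x // φ x = 0} = Nat.card φ.ker := rfl
  rw [prob_eq_card_div, hker, div_eq_div_iff (by positivity) (by positivity), one_mul]
  exact_mod_cast hcard

end Probability

section ExpMoments

variable {T α Ω S : Type*}

/-- `max_t exp (A t)` for a finite index type `T`, with the convention that the maximum over an
empty type is `0`. -/
def maxExp (A : T → ℝ) : ℝ := ⨆ t, Real.exp (A t)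

lemma maxExp_nonneg (A : T → ℝ) : 0 ≤ maxExp A := Real.iSup_nonneg fun _ => (Real.exp_pos _).le

lemma maxExp_le {A : T → ℝ} {c : ℝ} (hc : 0 ≤ c) (h : ∀ t, Real.exp (A t) ≤ c) : maxExp A ≤ c :=
  Real.iSup_le h hc

lemma expect_maxExp_sum_le_of_forall_shift [Fintype Ω] [Fintype S] {g : T → Ω → ℝ} {h : T → S → ℝ}
    (hgh : ∀ A : T → ℝ, 𝔼 x, maxExp (fun t => A t + g t x) ≤ 𝔼 s, maxExp (fun t => A t + h t s))
    (n : ℕ) (A : T → ℝ) :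
    𝔼 x : Fin n → Ω, maxExp (fun t => A t + ∑ j, g t (x j)) ≤
      𝔼 s : Fin n → S, maxExp (fun t => A t + ∑ j, h t (s j)) := by
  induction n generalizing A with
  | zero => simp
  | succ n ih =>
    simp only [expect_fin_succ_pi (n := n), Fin.sum_univ_succ, Fin.cons_zero, Fin.cons_succ]
    calc 𝔼 y : Fin n → Ω, 𝔼 x, maxExp (fun t => A t + (g t x + ∑ j, g t (y j)))
        = 𝔼 y : Fin n → Ω, 𝔼 x, maxExp (fun t => (A t + ∑ j, g t (y j)) + g t x) := by
          simp only [add_assoc, add_comm (g _ _)]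
      _ ≤ 𝔼 y : Fin n → Ω, 𝔼 s, maxExp (fun t => (A t + ∑ j, g t (y j)) + h t s) :=
          expect_le_expect fun y _ => hgh _
      _ = 𝔼 s, 𝔼 y : Fin n → Ω, maxExp (fun t => (A t + h t s) + ∑ j, g t (y j)) := by
          rw [expect_comm]
          simp only [add_right_comm]
      _ ≤ 𝔼 s, 𝔼 y : Fin n → S, maxExp (fun t => (A t + h t s) + ∑ j, h t (y j)) :=
          expect_le_expect fun s _ => ih _
      _ = 𝔼 y : Fin n → S, 𝔼 s, maxExp (fun t => A t + (h t s + ∑ j, h t (y j))) := by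
          rw [expect_comm]
          simp only [add_assoc]

variable [Finite T]

lemma exp_le_maxExp (A : T → ℝ) (t : T) : Real.exp (A t) ≤ maxExp A :=
  le_ciSup (f := fun t => Real.exp (A t)) (Set.finite_range _).bddAbove t

lemma maxExp_mono {A B : T → ℝ} (h : ∀ t, A t ≤ B t) : maxExp A ≤ maxExp B :=
  maxExp_le (maxExp_nonneg B) fun t => (Real.exp_le_exp.2 (h t)).trans (exp_le_maxExp B t)

lemma exp_le_half_exp_add_exp_sub (a r : ℝ) :
    Real.exp a ≤ (Real.exp (a + r) + Real.exp (a - r)) / 2 :=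
  calc Real.exp a ≤ Real.exp a * Real.cosh r :=
        le_mul_of_one_le_right (Real.exp_pos a).le (Real.one_le_cosh r)
    _ = (Real.exp (a + r) + Real.exp (a - r)) / 2 := by
        rw [Real.cosh_eq, sub_eq_add_neg, Real.exp_add, Real.exp_add]
        ring

lemma maxExp_le_half_add_sub (A r : T → ℝ) :
    maxExp A ≤ (maxExp (fun t => A t + r t) + maxExp (fun t => A t - r t)) / 2 := by
  refine maxExp_le ?_ fun t => ?_
  · linarith [maxExp_nonneg fun t => A t + r t, maxExp_nonneg fun t => A t - r t]
  · linarith [exp_le_half_exp_add_exp_sub (A t) (r t), exp_le_maxExp (fun t => A t + r t) t,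
      exp_le_maxExp (fun t => A t - r t) t]

/-- Symmetrization: `g t x - 𝔼 g t` is the average over an independent copy `y` of
`g t x - g t y`, the midpoint of `2 * g t x` and `-2 * g t y`. -/
lemma expect_maxExp_centered_le [Fintype Ω] [Nonempty Ω] (g : T → Ω → ℝ) (A : T → ℝ) :
    𝔼 x, maxExp (fun t => A t + (g t x - 𝔼 y, g t y)) ≤
      𝔼 x, (maxExp (fun t => A t + 2 * g t x) + maxExp (fun t => A t - 2 * g t x)) / 2 := by
  set E₁ : Ω → ℝ := fun x => maxExp fun t => A t + 2 * g t x
  set E₂ : Ω → ℝ := fun y => maxExp fun t => A t - 2 * g t y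
  have hmid (t : T) (x y : Ω) : Real.exp (A t + (g t x - g t y)) ≤ (E₁ x + E₂ y) / 2 := by
    have h := exp_le_half_exp_add_exp_sub (A t + (g t x - g t y)) (g t x + g t y)
    rw [show A t + (g t x - g t y) + (g t x + g t y) = A t + 2 * g t x by ring,
      show A t + (g t x - g t y) - (g t x + g t y) = A t - 2 * g t y by ring] at h
    linarith [exp_le_maxExp (fun t => A t + 2 * g t x) t,
      exp_le_maxExp (fun t => A t - 2 * g t y) t]
  have hcopy (x : Ω) : maxExp (fun t => A t + (g t x - 𝔼 y, g t y)) ≤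
      𝔼 y, (E₁ x + E₂ y) / 2 := by
    refine maxExp_le (expect_nonneg fun y _ => ?_) fun t => ?_
    · linarith [maxExp_nonneg fun t => A t + 2 * g t x, maxExp_nonneg fun t => A t - 2 * g t y]
    · calc Real.exp (A t + (g t x - 𝔼 y, g t y))
          = Real.exp (𝔼 y, (A t + (g t x - g t y))) := by
            simp only [expect_add_distrib, expect_sub_distrib, Fintype.expect_const]
        _ ≤ 𝔼 y, Real.exp (A t + (g t x - g t y)) := convexOn_map_expect_le convexOn_exp _
        _ ≤ 𝔼 y, (E₁ x + E₂ y) / 2 := expect_le_expect fun y _ => hmid t x y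
  refine (expect_le_expect fun x _ => hcopy x).trans_eq ?_
  simp only [add_div, expect_add_distrib, Fintype.expect_const, E₁, E₂]

lemma expect_sign_apply [Fintype α] (a : α) (f : ℤˣ → ℝ) :
    𝔼 σ : α → ℤˣ, f (σ a) = (f 1 + f (-1)) / 2 := by
  have hneg : 𝔼 σ : α → ℤˣ, f (-σ a) = 𝔼 σ : α → ℤˣ, f (σ a) :=
    Fintype.expect_equiv (Equiv.neg _) _ _ fun _ => rfl
  have hpair (u : ℤˣ) : f u + f (-u) = f 1 + f (-1) := by
    rcases Int.units_eq_one_or u with rfl | rfl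
    · rfl
    · rw [neg_neg, add_comm]
  have hsum : 𝔼 σ : α → ℤˣ, (f (σ a) + f (-σ a)) = f 1 + f (-1) := by
    simp only [hpair, Fintype.expect_const]
  rw [expect_add_distrib, hneg] at hsum
  linarith

/-- Averaging `σ` with the sign vector that agrees with `σ` at `a` and is opposite elsewhere leaves
only the term at `a`; by convexity this decreases `maxExp`. -/
lemma half_maxExp_add_sub_apply_le [Fintype α] (N : T → α → ℝ) (A : T → ℝ) (a : α) :
    (maxExp (fun t => A t + N t a) + maxExp (fun t => A t - N t a)) / 2 ≤
      𝔼 σ : α → ℤˣ, maxExp (fun t => A t + ∑ b, ((σ b : ℤ) : ℝ) * N t b) := by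
  set G : (α → ℤˣ) → ℝ := fun σ => maxExp fun t => A t + ∑ b, ((σ b : ℤ) : ℝ) * N t b
  set s : α → ℤˣ := fun b => if b = a then 1 else -1 with hs
  have hflip : 𝔼 σ, G (s * σ) = 𝔼 σ, G σ :=
    Fintype.expect_equiv (Equiv.mulLeft s) _ _ fun _ => rfl
  have hmid (σ : α → ℤˣ) :
      maxExp (fun t => A t + ((σ a : ℤ) : ℝ) * N t a) ≤ (G σ + G (s * σ)) / 2 := by
    have hrest (t : T) : ∑ b ∈ univ.erase a, (((s * σ) b : ℤ) : ℝ) * N t b =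
        -∑ b ∈ univ.erase a, ((σ b : ℤ) : ℝ) * N t b := by
      rw [← sum_neg_distrib]
      exact sum_congr rfl fun b hb => by simp [hs, ne_of_mem_erase hb]
    convert maxExp_le_half_add_sub _ fun t => ∑ b ∈ univ.erase a, ((σ b : ℤ) : ℝ) * N t b using 5
      with t t
    · rw [add_assoc, add_sum_erase _ (fun b => ((σ b : ℤ) : ℝ) * N t b) (mem_univ a)]
    · rw [← add_sum_erase _ _ (mem_univ a), hrest]
      simp only [hs, Pi.mul_apply, if_true, one_mul, sub_eq_add_neg, add_assoc]
  calc (maxExp (fun t => A t + N t a) + maxExp (fun t => A t - N t a)) / 2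
      = 𝔼 σ : α → ℤˣ, maxExp (fun t => A t + ((σ a : ℤ) : ℝ) * N t a) := by
        rw [expect_sign_apply a fun u => maxExp fun t => A t + ((u : ℤ) : ℝ) * N t a]
        simp [sub_eq_add_neg]
    _ ≤ 𝔼 σ, (G σ + G (s * σ)) / 2 := expect_le_expect fun σ _ => hmid σ
    _ = 𝔼 σ, G σ := by
        rw [← expect_div, expect_add_distrib, hflip]
        ring

/-- Contraction: if `t` is optimal for the sign `+` and `a` is a maximal entry of `N t`, then
passing from `⨆ b, N t b` to `N t a` costs nothing for the sign `+` and only helps for the sign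
`-`. -/
lemma half_maxExp_add_sub_iSup_le [Fintype α] [Nonempty α] (N : T → α → ℝ) (A : T → ℝ) :
    (maxExp (fun t => A t + ⨆ a, N t a) + maxExp (fun t => A t - ⨆ a, N t a)) / 2 ≤
      𝔼 σ : α → ℤˣ, maxExp (fun t => A t + ∑ a, ((σ a : ℤ) : ℝ) * N t a) := by
  obtain ⟨a, ha⟩ : ∃ a, maxExp (fun t => A t + ⨆ b, N t b) ≤ maxExp fun t => A t + N t a := by
    cases isEmpty_or_nonempty T
    · exact ⟨Classical.arbitrary α, by simp [maxExp]⟩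
    obtain ⟨t, ht⟩ :=
      exists_eq_ciSup_of_finite (f := fun t => Real.exp (A t + ⨆ b, N t b))
    obtain ⟨a, ha⟩ := exists_eq_ciSup_of_finite (f := N t)
    refine ⟨a, ?_⟩
    rw [maxExp, ← ht, ← ha]
    exact exp_le_maxExp (fun t => A t + N t a) t
  have hsub : maxExp (fun t => A t - ⨆ b, N t b) ≤ maxExp fun t => A t - N t a :=
    maxExp_mono fun t => sub_le_sub_left (le_ciSup (Set.finite_range (N t)).bddAbove a) _
  linarith [half_maxExp_add_sub_apply_le N A a]

end ExpMoments

section Plurality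

variable {M α : Type*}

/-- The number of elements of `t` that `f` maps to `a`: for a list `t` of messages whose symbols at
some coordinate are given by `f`, the number of votes for the symbol `a`. -/
def fiberCount (t : Finset M) (f : M → α) (a : α) : ℝ := #{m ∈ t | f m = a}

/-- The largest number of elements of `t` on which `f` takes a common value. -/
def plurality (t : Finset M) (f : M → α) : ℝ := ⨆ a, fiberCount t f a

lemma fiberCount_eq_sum (t : Finset M) (f : M → α) (a : α) :
    fiberCount t f a = ∑ m ∈ t, if f m = a then 1 else 0 := by
  rw [fiberCount, sum_boole]

lemma fiberCount_le_plurality (t : Finset M) (f : M → α) (a : α) :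
    fiberCount t f a ≤ plurality t f :=
  le_ciSup (f := fiberCount t f) ⟨#t, Set.forall_mem_range.2 fun _ =>
    Nat.cast_le.2 (card_filter_le t _)⟩ a

variable [Fintype α]

lemma sum_mul_fiberCount (c : α → ℝ) (t : Finset M) (f : M → α) :
    ∑ a, c a * fiberCount t f a = ∑ m ∈ t, c (f m) := by
  simp only [fiberCount_eq_sum, mul_sum, mul_ite, mul_one, mul_zero]
  rw [sum_comm]
  simp only [sum_ite_eq, mem_univ, if_true]

lemma sum_fiberCount (t : Finset M) (f : M → α) : ∑ a, fiberCount t f a = #t := by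
  simpa using sum_mul_fiberCount (fun _ => 1) t f

lemma sum_fiberCount_sq (t : Finset M) (f : M → α) :
    ∑ a, fiberCount t f a ^ 2 = ∑ m ∈ t, ∑ m' ∈ t, if f m' = f m then 1 else 0 := by
  simp only [sq]
  rw [sum_mul_fiberCount (fiberCount t f)]
  simp only [fiberCount_eq_sum]

variable [Nonempty α]

lemma sum_fiberCount_sub_mean (t : Finset M) (f : M → α) :
    ∑ a, (fiberCount t f a - #t / Fintype.card α) = 0 := by
  rw [sum_sub_distrib, sum_fiberCount, sum_const, card_univ, nsmul_eq_mul,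
    mul_div_cancel₀ _ (by positivity), sub_self]

lemma sum_fiberCount_sub_mean_sq (t : Finset M) (f : M → α) :
    ∑ a, (fiberCount t f a - #t / Fintype.card α) ^ 2 =
      ∑ a, fiberCount t f a ^ 2 - (#t : ℝ) ^ 2 / Fintype.card α := by
  simp only [sub_sq, sum_add_distrib, sum_sub_distrib, ← sum_mul, ← mul_sum, sum_fiberCount,
    sum_const, card_univ, nsmul_eq_mul]
  field_simp
  ring

lemma sq_le_mul_sum_sq_of_sum_eq_zero {u : α → ℝ} (hu : ∑ a, u a = 0) (a : α) :
    u a ^ 2 ≤ (1 - 1 / Fintype.card α) * ∑ b, u b ^ 2 := by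
  have hq : (0 : ℝ) < Fintype.card α := by positivity
  have hsum : ∑ b ∈ univ.erase a, u b = -u a := by
    linarith [add_sum_erase univ u (mem_univ a)]
  have hrest : u a ^ 2 ≤ (Fintype.card α - 1) * ∑ b ∈ univ.erase a, u b ^ 2 := by
    have h := sq_sum_le_card_mul_sum_sq (s := univ.erase a) (f := u)
    rwa [hsum, neg_sq, cast_card_erase_of_mem (mem_univ a), card_univ] at h
  rw [← add_sum_erase univ (fun b => u b ^ 2) (mem_univ a), one_sub_div hq.ne', div_mul_eq_mul_div,
    le_div_iff₀ hq]
  linarith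

lemma plurality_sub_mean_sq_le (t : Finset M) (f : M → α) :
    (plurality t f - #t / Fintype.card α) ^ 2 ≤
      (1 - 1 / Fintype.card α) * (∑ a, fiberCount t f a ^ 2 - (#t : ℝ) ^ 2 / Fintype.card α) := by
  obtain ⟨a, ha⟩ := exists_eq_ciSup_of_finite (f := fiberCount t f)
  rw [plurality, ← ha, ← sum_fiberCount_sub_mean_sq]
  exact sq_le_mul_sum_sq_of_sum_eq_zero (sum_fiberCount_sub_mean t f) a

end Plurality

section ListDecoding

variable {M α : Type*} {n : ℕ}

/-- Some list of `L` messages has plurality at least `θ * L` on average over the coordinates, where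
`f j m` is the `j`-th symbol of the codeword of the message `m`. -/
def HasConcentratedList (L : ℕ) (θ : ℝ) (f : Fin n → M → α) : Prop :=
  ∃ t : Finset M, #t = L ∧ n * (θ * L) ≤ ∑ j, plurality t (f j)

variable [DecidableEq α]

lemma mul_one_sub_le_card_agree {x y : Fin n → α} {ρ : ℝ} (h : relDist x y ≤ ρ) :
    n * (1 - ρ) ≤ #{j | x j = y j} := by
  rcases n.eq_zero_or_pos with rfl | hn
  · simp
  rw [relDist, div_le_iff₀ (by positivity)] at h
  have hcard : (#{j | x j = y j} : ℝ) + hammingDist x y = n := by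
    have h := card_filter_add_card_filter_not (s := univ) fun j => x j = y j
    rw [card_univ, Fintype.card_fin] at h
    exact_mod_cast h
  linarith

lemma exists_card_eq_relDist_le_of_not_listDecodableSet {g : M → Fin n → α} {ρ : ℝ} {L : ℕ}
    (h : ¬ listDecodableSet (Set.range g) ρ L) :
    ∃ (w : Fin n → α) (t : Finset M), #t = L + 1 ∧ ∀ m ∈ t, relDist (g m) w ≤ ρ := by
  simp only [listDecodableSet, not_forall, not_le] at h
  obtain ⟨w, hw⟩ := h
  have := Nat.finite_of_card_ne_zero hw.ne_bot
  have := Fintype.ofFinite {c // c ∈ Set.range g ∧ relDist c w ≤ ρ}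
  choose m hm using fun c : {c // c ∈ Set.range g ∧ relDist c w ≤ ρ} => c.2.1
  have hinj : Function.Injective m := fun c c' h => Subtype.ext <| by rw [← hm c, ← hm c', h]
  have hcard : L + 1 ≤ #(univ.image m) := by
    rwa [card_image_of_injective _ hinj, card_univ, ← Nat.card_eq_fintype_card]
  obtain ⟨t, hsub, ht⟩ := exists_subset_card_eq hcard
  refine ⟨w, t, ht, fun m' hm' => ?_⟩
  obtain ⟨c, -, rfl⟩ := mem_image.1 (hsub hm')
  exact (hm c).symm ▸ c.2.2

lemma hasConcentratedList_of_not_listDecodableSet {f : Fin n → M → α} {ρ : ℝ} {L : ℕ}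
    (h : ¬ listDecodableSet (Set.range fun m j => f j m) ρ L) :
    HasConcentratedList (L + 1) (1 - ρ) f := by
  obtain ⟨w, t, ht, hw⟩ := exists_card_eq_relDist_le_of_not_listDecodableSet h
  refine ⟨t, ht, ?_⟩
  calc n * ((1 - ρ) * (L + 1 : ℕ))
      = ∑ m ∈ t, n * (1 - ρ) := by rw [sum_const, ht, nsmul_eq_mul]; ring
    _ ≤ ∑ m ∈ t, (#{j | f j m = w j} : ℝ) :=
        sum_le_sum fun m hm => mul_one_sub_le_card_agree (hw m hm)
    _ = ∑ j, fiberCount t (f j) (w j) := by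
        simp only [fiberCount_eq_sum, ← sum_boole]
        rw [sum_comm]
        congr!
    _ ≤ ∑ j, plurality t (f j) := sum_le_sum fun j _ => fiberCount_le_plurality t (f j) (w j)

end ListDecoding

section UniversalFamily

variable {X M α : Type*} [Fintype X] [Fintype α]

/-- A universal family of hash functions in the sense of Carter and Wegman: distinct `m` and `m'`
collide under `c x`, for a uniformly random `x`, with probability at most `1 / |α|`. -/
def IsUniversalFamily (c : X → M → α) : Prop :=
  ∀ ⦃m m' : M⦄, m ≠ m' → prob (fun x => c x m = c x m') ≤ 1 / Fintype.card α

variable {c : X → M → α}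

lemma IsUniversalFamily.expect_sum_fiberCount_sq_le (hc : IsUniversalFamily c) (t : Finset M) :
    𝔼 x, ∑ a, fiberCount t (c x) a ^ 2 ≤ #t + #t * (#t - 1) / Fintype.card α := by
  have hrow (m : M) (hm : m ∈ t) : ∑ m' ∈ t, prob (fun x => c x m' = c x m) ≤
      1 + (#t - 1) * (1 / Fintype.card α) := by
    rw [← add_sum_erase _ _ hm, ← cast_card_erase_of_mem hm, ← nsmul_eq_mul]
    exact add_le_add (prob_le_one _)
      (sum_le_card_nsmul _ _ _ fun m' hm' => hc (ne_of_mem_erase hm'))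
  calc 𝔼 x, ∑ a, fiberCount t (c x) a ^ 2
      = ∑ m ∈ t, ∑ m' ∈ t, prob (fun x => c x m' = c x m) := by
        simp only [sum_fiberCount_sq, expect_sum_comm, prob]
    _ ≤ ∑ m ∈ t, (1 + (#t - 1) * (1 / Fintype.card α) : ℝ) := sum_le_sum hrow
    _ = #t + #t * (#t - 1) / Fintype.card α := by
        rw [sum_const, nsmul_eq_mul]
        ring

lemma IsUniversalFamily.expect_plurality_le [Nonempty X] [Nonempty α] (hc : IsUniversalFamily c)
    (t : Finset M) :
    𝔼 x, plurality t (c x) ≤ #t / Fintype.card α + (1 - 1 / Fintype.card α) * √(#t) := by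
  set q : ℝ := (Fintype.card α : ℝ)
  have hq : 1 ≤ q := Nat.one_le_cast.2 Fintype.card_pos
  have hp : 0 ≤ 1 - 1 / q := sub_nonneg.2 (div_le_one_of_le₀ hq (by linarith))
  have hsq : (𝔼 x, (plurality t (c x) - #t / q)) ^ 2 ≤ ((1 - 1 / q) * √(#t)) ^ 2 :=
    calc (𝔼 x, (plurality t (c x) - #t / q)) ^ 2
        ≤ 𝔼 x, (plurality t (c x) - #t / q) ^ 2 :=
          convexOn_map_expect_le even_two.convexOn_pow _
      _ ≤ 𝔼 x, (1 - 1 / q) * (∑ a, fiberCount t (c x) a ^ 2 - (#t : ℝ) ^ 2 / q) :=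
          expect_le_expect fun x _ => plurality_sub_mean_sq_le t (c x)
      _ = (1 - 1 / q) * (𝔼 x, ∑ a, fiberCount t (c x) a ^ 2 - (#t : ℝ) ^ 2 / q) := by
          rw [← mul_expect, expect_sub_distrib, Fintype.expect_const]
      _ ≤ (1 - 1 / q) * (#t + #t * (#t - 1) / q - (#t : ℝ) ^ 2 / q) := by
          gcongr
          exact hc.expect_sum_fiberCount_sq_le t
      _ = ((1 - 1 / q) * √(#t)) ^ 2 := by
          rw [mul_pow, Real.sq_sqrt (by positivity)]
          ring
  have habs := abs_le_of_sq_le_sq hsq (by positivity)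
  rw [expect_sub_distrib, Fintype.expect_const] at habs
  linarith [(abs_le.1 habs).2]

end UniversalFamily

section Fluctuations

variable {X M α T : Type*} [Fintype X] [Fintype α]

lemma expect_maxExp_plurality_le [Nonempty X] [Nonempty α] [Finite T] (c : X → M → α)
    {τ : T → Finset M} {b l : ℝ} (hl : 0 ≤ l) (hb : ∀ t, 𝔼 x, plurality (τ t) (c x) ≤ b)
    (A : T → ℝ) :
    𝔼 x, maxExp (fun t => A t + l * (plurality (τ t) (c x) - b)) ≤
      𝔼 s : X × (α → ℤˣ),
        maxExp (fun t => A t + ∑ m ∈ τ t, 2 * l * ((s.2 (c s.1 m) : ℤ) : ℝ)) := by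
  have hsup (t : T) (x : X) : 2 * (l * plurality (τ t) (c x)) =
      ⨆ a, 2 * l * fiberCount (τ t) (c x) a := by
    rw [plurality, ← mul_assoc, Real.mul_iSup_of_nonneg (by positivity)]
  calc 𝔼 x, maxExp (fun t => A t + l * (plurality (τ t) (c x) - b))
      ≤ 𝔼 x, maxExp (fun t => A t +
          (l * plurality (τ t) (c x) - 𝔼 y, l * plurality (τ t) (c y))) := by
        refine expect_le_expect fun x _ => maxExp_mono fun t => ?_
        rw [← mul_expect, ← mul_sub]
        gcongr
        exact hb t
    _ ≤ 𝔼 x, (maxExp (fun t => A t + ⨆ a, 2 * l * fiberCount (τ t) (c x) a) +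
          maxExp (fun t => A t - ⨆ a, 2 * l * fiberCount (τ t) (c x) a)) / 2 := by
        simp only [← hsup]
        exact expect_maxExp_centered_le (fun t x => l * plurality (τ t) (c x)) A
    _ ≤ 𝔼 x, 𝔼 σ : α → ℤˣ, maxExp (fun t => A t +
          ∑ a, ((σ a : ℤ) : ℝ) * (2 * l * fiberCount (τ t) (c x) a)) :=
        expect_le_expect fun x _ => half_maxExp_add_sub_iSup_le _ A
    _ = 𝔼 s : X × (α → ℤˣ),
          maxExp (fun t => A t + ∑ m ∈ τ t, 2 * l * ((s.2 (c s.1 m) : ℤ) : ℝ)) := by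
        rw [expect_prod_eq_expect_expect]
        refine expect_congr rfl fun x _ => expect_congr rfl fun σ _ => congrArg maxExp ?_
        funext t
        rw [← sum_mul_fiberCount fun a => 2 * l * ((σ a : ℤ) : ℝ)]
        simp only [mul_left_comm, mul_assoc]

lemma expect_exp_sum_sign_le [Nonempty X] (f : X → α) (r : ℝ) (n : ℕ) :
    𝔼 s : Fin n → X × (α → ℤˣ), Real.exp (∑ j, r * (((s j).2 (f (s j).1) : ℤ) : ℝ)) ≤
      Real.exp (n * (r ^ 2 / 2)) := by
  have hcosh : 𝔼 s : X × (α → ℤˣ), Real.exp (r * ((s.2 (f s.1) : ℤ) : ℝ)) = Real.cosh r := by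
    have hsign (x : X) := expect_sign_apply (f x) fun u => Real.exp (r * ((u : ℤ) : ℝ))
    simp only [expect_prod_eq_expect_expect, hsign, Fintype.expect_const, Real.cosh_eq]
    simp
  simp only [Real.exp_sum]
  rw [expect_prod_pi fun s : X × (α → ℤˣ) => Real.exp (r * ((s.2 (f s.1) : ℤ) : ℝ)), hcosh,
    Real.exp_nat_mul]
  exact pow_le_pow_left₀ (Real.cosh_pos r).le (Real.cosh_le_exp_half_sq r) n

lemma exp_sum_le_sum_exp_card_mul {t : Finset M} (ht : t.Nonempty) (g : M → ℝ) :
    Real.exp (∑ m ∈ t, g m) ≤ ∑ m ∈ t, Real.exp (#t * g m) := by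
  obtain ⟨m, hm, hmax⟩ := exists_max_image t g ht
  calc Real.exp (∑ m ∈ t, g m)
      ≤ Real.exp (#t * g m) := by
        rw [← nsmul_eq_mul]
        exact Real.exp_le_exp.2 (sum_le_card_nsmul t g (g m) hmax)
    _ ≤ ∑ m ∈ t, Real.exp (#t * g m) :=
        single_le_sum (f := fun m => Real.exp (#t * g m)) (fun _ _ => (Real.exp_pos _).le) hm

/-- The signed sums are additive in the list, so that a union bound over single messages suffices in
place of one over lists. -/
lemma expect_maxExp_sum_sign_le [Nonempty X] [Fintype M] (c : X → M → α) {L : ℕ} (hL : 0 < L)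
    {τ : T → Finset M} (hτ : ∀ t, #(τ t) = L) (r : ℝ) (n : ℕ) :
    𝔼 s : Fin n → X × (α → ℤˣ),
        maxExp (fun t => ∑ j, ∑ m ∈ τ t, r * (((s j).2 (c (s j).1 m) : ℤ) : ℝ)) ≤
      Fintype.card M * Real.exp (n * ((L * r) ^ 2 / 2)) := by
  set Z : (Fin n → X × (α → ℤˣ)) → M → ℝ :=
    fun s m => ∑ j, r * (((s j).2 (c (s j).1 m) : ℤ) : ℝ)
  have hpoint (s : Fin n → X × (α → ℤˣ)) :
      maxExp (fun t => ∑ j, ∑ m ∈ τ t, r * (((s j).2 (c (s j).1 m) : ℤ) : ℝ)) ≤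
        ∑ m, Real.exp (L * Z s m) := by
    refine maxExp_le (by positivity) fun t => ?_
    rw [sum_comm, ← hτ t]
    refine (exp_sum_le_sum_exp_card_mul (card_pos.1 (hτ t ▸ hL)) _).trans ?_
    exact sum_le_univ_sum_of_nonneg fun _ => (Real.exp_pos _).le
  calc _ ≤ 𝔼 s, ∑ m, Real.exp (L * Z s m) := expect_le_expect fun s _ => hpoint s
    _ = ∑ m, 𝔼 s, Real.exp (L * Z s m) := expect_sum_comm ..
    _ ≤ ∑ _m : M, Real.exp (n * ((L * r) ^ 2 / 2)) := by
        refine sum_le_sum fun m _ => ?_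
        simp only [Z, mul_sum, ← mul_assoc]
        exact expect_exp_sum_sign_le (fun x => c x m) (L * r) n
    _ = Fintype.card M * Real.exp (n * ((L * r) ^ 2 / 2)) := by
        rw [sum_const, card_univ, nsmul_eq_mul]

end Fluctuations

section RandomCode

variable {X M α : Type*} [Fintype X] [Nonempty X] [Fintype M]

lemma prob_hasConcentratedList_le [Finite α] [Nonempty α] (c : X → M → α) {L : ℕ}
    (hL : 0 < L) {b s : ℝ} (hs : 0 ≤ s)
    (hb : ∀ t : Finset M, #t = L → 𝔼 x, plurality t (c x) ≤ b * L) (n : ℕ) :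
    prob (fun x : Fin n → X => HasConcentratedList L (b + s) fun j => c (x j)) ≤
      Fintype.card M * Real.exp (-(n * (s ^ 2 / 8))) := by
  have := Fintype.ofFinite α
  set l : ℝ := s / (4 * L) with hl
  have hl0 : 0 ≤ l := by positivity
  let E (x : Fin n → X) : ℝ := maxExp fun t : {t : Finset M // #t = L} =>
    ∑ j, l * (plurality t.1 (c (x j)) - b * L)
  have hE (x : Fin n → X) (hx : HasConcentratedList L (b + s) fun j => c (x j)) :
      Real.exp (n * (s ^ 2 / 4)) ≤ E x := by
    obtain ⟨t, ht, hsum⟩ := hx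
    refine le_trans (Real.exp_le_exp.2 ?_) (exp_le_maxExp _ ⟨t, ht⟩)
    calc n * (s ^ 2 / 4) = l * (n * ((b + s) * L) - n * (b * L)) := by rw [hl]; field_simp; ring
      _ ≤ l * (∑ j, plurality t (c (x j)) - n * (b * L)) := by gcongr
      _ = ∑ j, l * (plurality t (c (x j)) - b * L) := by
          rw [← mul_sum, sum_sub_distrib, sum_const, card_univ, Fintype.card_fin, nsmul_eq_mul]
  have hmoment : 𝔼 x, E x ≤ Fintype.card M * Real.exp (n * (s ^ 2 / 8)) := by
    have h := expect_maxExp_sum_le_of_forall_shift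
      (expect_maxExp_plurality_le c hl0 fun t : {t : Finset M // #t = L} => hb t.1 t.2) n 0
    simp only [Pi.zero_apply, zero_add] at h
    have hLl : (L * (2 * l)) ^ 2 / 2 = s ^ 2 / 8 := by
      rw [hl]
      field_simp
      ring
    exact hLl ▸ h.trans (expect_maxExp_sum_sign_le c hL Subtype.property (2 * l) n)
  have hmarkov := (prob_mul_le_expect (fun x => maxExp_nonneg _) hE).trans hmoment
  rw [← le_div_iff₀ (Real.exp_pos _), mul_div_assoc, ← Real.exp_sub] at hmarkov
  exact hmarkov.trans_eq (by ring_nf)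

variable [Fintype α] [Nontrivial α] [DecidableEq α] {c : X → M → α}

lemma IsUniversalFamily.prob_not_listDecodableSet_le (hc : IsUniversalFamily c) {ε : ℝ}
    (hε : 0 < ε) {L : ℕ} (hL : 4 / ε ^ 2 ≤ L + 1) (n : ℕ) :
    prob (fun x : Fin n → X => ¬ listDecodableSet (Set.range fun m j => c (x j) m)
        ((1 - 1 / Fintype.card α) * (1 - ε)) L) ≤
      Fintype.card M * Real.exp (-(ε ^ 2 * n / 128)) := by
  set q : ℝ := (Fintype.card α : ℝ)
  have hq : 2 ≤ q := Nat.ofNat_le_cast.2 (Fintype.one_lt_card (α := α))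
  have hp : 1 / 2 ≤ 1 - 1 / q := by linarith [one_div_le_one_div_of_le two_pos hq]
  set s : ℝ := (1 - 1 / q) * ε / 2 with hs
  have hsqrt : √(L + 1) ≤ ε / 2 * (L + 1) := by
    rw [div_le_iff₀ (by positivity)] at hL
    rw [Real.sqrt_le_left (by positivity)]
    nlinarith
  have hmean (t : Finset M) (ht : #t = L + 1) :
      𝔼 x, plurality t (c x) ≤ (1 / q + s) * (L + 1 : ℕ) :=
    calc 𝔼 x, plurality t (c x)
        ≤ (L + 1) / q + (1 - 1 / q) * √(L + 1) := by
          simpa only [ht, Nat.cast_succ] using hc.expect_plurality_le t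
      _ ≤ (L + 1) / q + (1 - 1 / q) * (ε / 2 * (L + 1)) := by gcongr
      _ = (1 / q + s) * (L + 1 : ℕ) := by rw [hs, Nat.cast_succ]; ring
  have hθ : 1 - (1 - 1 / q) * (1 - ε) = 1 / q + s + s := by rw [hs]; ring
  calc _ ≤ prob (fun x : Fin n → X => HasConcentratedList (L + 1) (1 / q + s + s)
          fun j => c (x j)) :=
        prob_mono fun x h => hθ ▸ hasConcentratedList_of_not_listDecodableSet h
    _ ≤ Fintype.card M * Real.exp (-(n * (s ^ 2 / 8))) :=
        prob_hasConcentratedList_le c L.succ_pos (by positivity) hmean n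
    _ ≤ Fintype.card M * Real.exp (-(ε ^ 2 * n / 128)) := by
        have hsε : ε / 4 ≤ s := by rw [hs]; nlinarith
        gcongr
        nlinarith [pow_le_pow_left₀ (by positivity) hsε 2, n.cast_nonneg (α := ℝ)]

end RandomCode

section LinearCodes

variable {F : Type*} [Field F] [Fintype F]

lemma prob_dotProduct_eq_zero {ι : Type*} [Fintype ι] [DecidableEq ι] {m : ι → F} (hm : m ≠ 0) :
    prob (fun x : ι → F => x ⬝ᵥ m = 0) = 1 / Fintype.card F := by
  set φ : (ι → F) →ₗ[F] F := (dotProductBilin F F).flip m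
  have hφ : φ ≠ 0 := by
    intro h
    exact hm (dotProduct_eq_zero _ fun x => by rw [dotProduct_comm]; exact LinearMap.congr_fun h x)
  exact prob_map_eq_zero φ.toAddMonoidHom (LinearMap.surjective hφ)

lemma isUniversalFamily_dotProduct (ι : Type*) [Fintype ι] [DecidableEq ι] :
    IsUniversalFamily fun x m : ι → F => x ⬝ᵥ m := by
  intro m m' h
  simp only [← sub_eq_zero (a := _ ⬝ᵥ m), ← dotProduct_sub]
  exact (prob_dotProduct_eq_zero (sub_ne_zero.2 h)).le

end LinearCodes

section Subspaces

variable {K U W : Type*} [Field K] [AddCommGroup U] [Module K U] [AddCommGroup W] [Module K W]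
  [FiniteDimensional K U]

/-- A parametrization of a subspace `V` of dimension `dim U` by `U` is the same as a linear map on
`U` with range `V`. -/
def linearEquivEquivRangeEq {V : Submodule K W} (hV : Module.finrank K V = Module.finrank K U) :
    (U ≃ₗ[K] V) ≃ {f : U →ₗ[K] W // LinearMap.range f = V} :=
  Equiv.ofBijective
    (fun e => ⟨V.subtype ∘ₗ e.toLinearMap, by
      rw [LinearMap.range_comp, LinearEquiv.range, Submodule.map_subtype_top]⟩) <| by
    constructor
    · intro e e' h
      ext u
      exact LinearMap.congr_fun (Subtype.ext_iff.1 h) u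
    · rintro ⟨f, rfl⟩
      have hf : LinearMap.ker f = ⊥ := by
        have h := f.finrank_range_add_finrank_ker
        rw [hV, Nat.add_eq_left] at h
        exact Submodule.finrank_eq_zero.1 h
      exact ⟨LinearEquiv.ofInjective f (LinearMap.ker_eq_bot.1 hf), rfl⟩

lemma card_linearMap_range [FiniteDimensional K W] (Q : Submodule K W → Prop)
    (hQ : ∀ V, Q V → Module.finrank K V = Module.finrank K U) :
    Nat.card {f : U →ₗ[K] W // Q (LinearMap.range f)} =
      Nat.card {V // Q V} * Nat.card (U ≃ₗ[K] U) := by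
  have hfiber (V : {V // Q V}) :
      Nonempty ({f : U →ₗ[K] W // LinearMap.range f = V} ≃ (U ≃ₗ[K] U)) := by
    let φ : V.1 ≃ₗ[K] U := LinearEquiv.ofFinrankEq _ _ (hQ V V.2)
    exact ⟨(linearEquivEquivRangeEq (hQ V V.2)).symm.trans
      ⟨fun e => e.trans φ, fun e => e.trans φ.symm, fun e => by ext; simp, fun e => by ext; simp⟩⟩
  rw [← Nat.card_prod]
  exact Nat.card_congr <|
    (Equiv.sigmaSubtypeFiberEquivSubtype LinearMap.range fun _ => Iff.rfl).symm.trans <|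
      Equiv.sigmaEquivProdOfEquiv fun V => (hfiber V).some

end Subspaces

section RandomSubspace

/-- The probability that a uniformly random `k`-dimensional subspace of `W` satisfies `B`. -/
def subspaceProb {K W : Type*} [Field K] [AddCommGroup W] [Module K W] (k : ℕ)
    (B : Submodule K W → Prop) : ℝ :=
  (Nat.card {V : Submodule K W // Module.finrank K V = k ∧ B V} : ℝ) /
    Nat.card {V : Submodule K W // Module.finrank K V = k}

variable {F : Type*} [Field F] {k n : ℕ}

/-- The linear code generated by the rows `x j`: the `j`-th symbol of the codeword of `m` is
`x j ⬝ᵥ m`. -/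
def encode : (Fin n → Fin k → F) ≃ ((Fin k → F) →ₗ[F] (Fin n → F)) :=
  Matrix.of.trans Matrix.toLin'.toEquiv

lemma encode_apply (x : Fin n → Fin k → F) (m : Fin k → F) : encode x m = fun j => x j ⬝ᵥ m := rfl

variable [Fintype F]

lemma prob_range_encode (Q : Submodule F (Fin n → F) → Prop)
    (hQ : ∀ V, Q V → Module.finrank F V = k) :
    prob (fun x : Fin n → Fin k → F => Q (LinearMap.range (encode x))) =
      Nat.card {V // Q V} * Nat.card ((Fin k → F) ≃ₗ[F] (Fin k → F)) /
        Fintype.card (Fin n → Fin k → F) := by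
  have hcard : Nat.card {x : Fin n → Fin k → F // Q (LinearMap.range (encode x))} =
      Nat.card {f : (Fin k → F) →ₗ[F] (Fin n → F) // Q (LinearMap.range f)} :=
    Nat.card_congr (encode.subtypeEquiv fun _ => Iff.rfl)
  rw [prob_eq_card_div, hcard, card_linearMap_range Q (by simpa using hQ), Nat.cast_mul]

lemma subspaceProb_eq_div (B : Submodule F (Fin n → F) → Prop) :
    subspaceProb k B =
      prob (fun x : Fin n → Fin k → F => Module.finrank F (LinearMap.range (encode x)) = k ∧
        B (LinearMap.range (encode x))) /
      prob (fun x : Fin n → Fin k → F => Module.finrank F (LinearMap.range (encode x)) = k) := by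
  have hpos : (0 : ℝ) < Nat.card ((Fin k → F) ≃ₗ[F] (Fin k → F)) := by
    have : Finite ((Fin k → F) ≃ₗ[F] (Fin k → F)) := DFunLike.finite _
    exact_mod_cast Nat.card_pos
  rw [prob_range_encode (fun V => Module.finrank F V = k ∧ B V) fun _ hV => hV.1,
    prob_range_encode (fun V => Module.finrank F V = k) fun _ hV => hV,
    div_div_div_cancel_right₀ (by positivity), mul_div_mul_right _ _ hpos.ne', subspaceProb]

lemma prob_finrank_range_encode_ne_le :
    prob (fun x : Fin n → Fin k → F => ¬ Module.finrank F (LinearMap.range (encode x)) = k) ≤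
      (Fintype.card F : ℝ) ^ k / (Fintype.card F : ℝ) ^ n := by
  have hkernel (x : Fin n → Fin k → F)
      (hx : ¬ Module.finrank F (LinearMap.range (encode x)) = k) :
      ∃ m : {m : Fin k → F // m ≠ 0}, ∀ j, x j ⬝ᵥ m = 0 := by
    contrapose! hx
    rw [LinearMap.finrank_range_of_inj, Module.finrank_fin_fun]
    refine (injective_iff_map_eq_zero _).2 fun m hm => ?_
    by_contra hm0
    obtain ⟨j, hj⟩ := hx ⟨m, hm0⟩
    exact hj (congrFun hm j)
  calc _ ≤ prob (fun x : Fin n → Fin k → F => ∃ m : {m : Fin k → F // m ≠ 0},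
          ∀ j, x j ⬝ᵥ m = 0) := prob_mono hkernel
    _ ≤ ∑ m : {m : Fin k → F // m ≠ 0},
          prob (fun x : Fin n → Fin k → F => ∀ j, x j ⬝ᵥ m = 0) := prob_exists_le_sum_prob _
    _ = ∑ _m : {m : Fin k → F // m ≠ 0}, (1 / (Fintype.card F : ℝ)) ^ n :=
        sum_congr rfl fun m _ => by
          rw [prob_forall_pi fun y => y ⬝ᵥ m.1 = 0, prob_dotProduct_eq_zero m.2]
    _ = Fintype.card {m : Fin k → F // m ≠ 0} * (1 / (Fintype.card F : ℝ)) ^ n := by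
        rw [sum_const, card_univ, nsmul_eq_mul]
    _ ≤ Fintype.card (Fin k → F) * (1 / (Fintype.card F : ℝ)) ^ n := by
        gcongr
        exact Fintype.card_subtype_le _
    _ = (Fintype.card F : ℝ) ^ k / (Fintype.card F : ℝ) ^ n := by
        rw [Fintype.card_pi_const, Nat.cast_pow, one_div_pow, mul_one_div]

lemma one_sub_two_mul_prob_le_subspaceProb (hkn : k < n) (B : Submodule F (Fin n → F) → Prop) :
    1 - 2 * prob (fun x : Fin n → Fin k → F => ¬ B (LinearMap.range (encode x))) ≤
      subspaceProb k B := by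
  set q : ℝ := (Fintype.card F : ℝ)
  have hq : 2 ≤ q := Nat.ofNat_le_cast.2 Fintype.one_lt_card
  set full : (Fin n → Fin k → F) → Prop :=
    fun x => Module.finrank F (LinearMap.range (encode x)) = k
  have hfull : 1 / 2 ≤ prob full := by
    have hpow : q ^ k / q ^ n ≤ 1 / 2 := by
      rw [div_le_div_iff₀ (by positivity) two_pos, one_mul]
      calc q ^ k * 2 ≤ q ^ k * q := by gcongr
        _ ≤ q ^ n := pow_succ q k ▸ pow_le_pow_right₀ (by linarith) hkn
    linarith [prob_add_prob_not full, prob_finrank_range_encode_ne_le (F := F) (k := k) (n := n)]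
  have hbad := prob_nonneg fun x : Fin n → Fin k → F => ¬ B (LinearMap.range (encode x))
  rw [subspaceProb_eq_div, le_div_iff₀ (by linarith)]
  nlinarith [prob_le_prob_and_add_prob_not full fun x => B (LinearMap.range (encode x))]

end RandomSubspace

section Rate

variable {F : Type*} [Field F] [Fintype F] {k n L : ℕ} {ε : ℝ}

lemma one_sub_le_subspaceProb_listDecodableSet [DecidableEq F] (hkn : k < n) (hε : 0 < ε)
    (hL : 4 / ε ^ 2 ≤ L) :
    1 - 2 * ((Fintype.card F : ℝ) ^ k * Real.exp (-(ε ^ 2 * n / 128))) ≤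
      subspaceProb k fun V : Submodule F (Fin n → F) =>
        listDecodableSet (V : Set (Fin n → F)) ((1 - 1 / Fintype.card F) * (1 - ε)) L := by
  refine le_trans ?_ (one_sub_two_mul_prob_le_subspaceProb hkn _)
  have h := (isUniversalFamily_dotProduct (F := F) (Fin k)).prob_not_listDecodableSet_le hε
    (hL.trans (by linarith)) n
  rw [Fintype.card_pi_const, Nat.cast_pow] at h
  gcongr
  simpa only [LinearMap.coe_range, funext (encode_apply _)] using h

lemma pow_floor_div_log_le_exp {b y : ℝ} (hb : 1 < b) (hy : 0 ≤ y) :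
    b ^ ⌊y / Real.log b⌋₊ ≤ Real.exp y := by
  have hlog := Real.log_pos hb
  rw [← Real.log_le_iff_le_exp (by positivity), Real.log_pow, ← le_div_iff₀ hlog]
  exact Nat.floor_le (by positivity)

lemma floor_div_log_lt {b y : ℝ} (hb : 2 ≤ b) (hy : 0 < y) (hn : 2 * y ≤ n) :
    ⌊y / Real.log b⌋₊ < n := by
  have hlog : 1 / 2 < Real.log b :=
    (by linarith [Real.log_two_gt_d9] : 1 / 2 < Real.log 2).trans_le
      (Real.log_le_log two_pos hb)
  rw [Nat.floor_lt (by positivity), div_lt_iff₀ (by linarith)]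
  nlinarith

lemma one_sub_exp_le_subspaceProb_listDecodableSet [DecidableEq F] (hn : 0 < n) (hε : 0 < ε)
    (hε1 : ε ≤ 1) (hL : 4 / ε ^ 2 ≤ L) :
    1 - 2 * Real.exp (-(ε ^ 2 / 256 * n)) ≤
      subspaceProb ⌊ε ^ 2 * n / (256 * Real.log (Fintype.card F))⌋₊
        fun V : Submodule F (Fin n → F) =>
          listDecodableSet (V : Set (Fin n → F)) ((1 - 1 / Fintype.card F) * (1 - ε)) L := by
  set q : ℝ := (Fintype.card F : ℝ)
  have hq : 2 ≤ q := Nat.ofNat_le_cast.2 Fintype.one_lt_card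
  set y : ℝ := ε ^ 2 / 256 * n with hy
  rw [show ε ^ 2 * n / (256 * Real.log q) = y / Real.log q by ring]
  have hkn : ⌊y / Real.log q⌋₊ < n := floor_div_log_lt hq (by positivity) <| by
    have hε2 : ε ^ 2 ≤ 1 := pow_le_one₀ hε.le hε1
    rw [hy]
    linarith [mul_le_mul_of_nonneg_right hε2 (n.cast_nonneg : (0 : ℝ) ≤ n)]
  refine le_trans ?_ (one_sub_le_subspaceProb_listDecodableSet hkn hε hL)
  gcongr
  calc q ^ ⌊y / Real.log q⌋₊ * Real.exp (-(ε ^ 2 * n / 128))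
      ≤ Real.exp y * Real.exp (-(ε ^ 2 * n / 128)) := by
        gcongr
        exact pow_floor_div_log_le_exp (by linarith) (by positivity)
    _ = Real.exp (-y) := by
        rw [← Real.exp_add]
        congr 1
        ring

end Rate

/-- Main theorem: there is an absolute constant `C > 0` such that for every
prime power `q` (realised as the cardinality of a finite field `F`) and every `ε ∈ (0,1)`:
for every `γ > 0` there exists `n₀` such that for all `n ≥ n₀`, with `k = ⌊ε²n/(C·log q)⌋`,
a uniformly random `k`-dimensional linear subspace of `F^n` is
`((1 − 1/q)(1 − ε), ⌈4/ε²⌉)`-list decodable with probability at least `1 − γ`.  The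
probability is expressed as the ratio of the number of `k`-dimensional subspaces that are
list decodable to the total number of `k`-dimensional subspaces. -/
theorem stmt0 :
    ∃ C : ℝ, 0 < C ∧
      ∀ (q : ℕ) (F : Type) [Field F] [Fintype F] [DecidableEq F],
        Fintype.card F = q →
        ∀ ε : ℝ, 0 < ε → ε < 1 →
        ∀ γ : ℝ, 0 < γ →
        ∃ n₀ : ℕ, ∀ n : ℕ, n₀ ≤ n →
          1 - γ ≤
            (Nat.card {V : Submodule F (Fin n → F) //
                Module.finrank F V = ⌊ε ^ 2 * n / (C * Real.log q)⌋₊ ∧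
                listDecodableSet (V : Set (Fin n → F))
                  ((1 - 1 / (q : ℝ)) * (1 - ε)) ⌈4 / ε ^ 2⌉₊} : ℝ) /
              (Nat.card {V : Submodule F (Fin n → F) //
                Module.finrank F V = ⌊ε ^ 2 * n / (C * Real.log q)⌋₊} : ℝ) := by
  refine ⟨256, by norm_num, ?_⟩
  rintro q F _ _ _ rfl ε hε hε1 γ hγ
  have htend : Filter.Tendsto (fun n : ℕ => 2 * Real.exp (-(ε ^ 2 / 256 * n)))
      Filter.atTop (nhds 0) := by
    simpa using (Real.tendsto_exp_neg_atTop_nhds_zero.comp <|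
      tendsto_natCast_atTop_atTop.const_mul_atTop (by positivity : 0 < ε ^ 2 / 256)).const_mul 2
  obtain ⟨n₀, hn₀⟩ := Filter.eventually_atTop.1
    ((htend.eventually_le_const hγ).and (Filter.eventually_gt_atTop 0))
  refine ⟨n₀, fun n hn => ?_⟩
  obtain ⟨hexp, hpos⟩ := hn₀ n hn
  exact (sub_le_sub_left hexp 1).trans
    (one_sub_exp_le_subspaceProb_listDecodableSet hpos hε hε1.le (Nat.le_ceil _))
end
end

section
/- Let q be a prime power, k, n ≥ 1, and let G be a uniformly random matrix in F_q^{k×n}. For messages i, j ∈ F_q^k, let c_i = iG and c_j = jG be the corresponding codewords in F_q^n. Then the expected inner product E⟨φ(c_i), φ(c_j)⟩ equals (q−1)n if i = j and equals 0 if i ≠ j. In particular, for a uniformly random t ∈ F_q^k and distinct i ≠ j ∈ F_q^k, the probability that ⟨t,i⟩ ≠ ⟨t,j⟩ equals 1 − 1/q. -/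
/-!
Whatever the labelling `e`, the simplex encodings of two symbols have inner product `q - 1`
or `-1` according as the symbols agree or not, since the powers of a nontrivial `q`-th root of
unity sum to zero. Hence `⟨φ(x), φ(y)⟩ = (q - 1) n - q Δ(x, y)`, where `Δ` is the Hamming distance.
For `i ≠ j`, each coordinate of `iG` and of `jG` is a linear form in `G`; these two forms are
distinct, so their difference is equidistributed on `F` and they disagree with probability
`1 - 1/q`. The expected distance is therefore `n (1 - 1/q)`, which makes the expected inner product
vanish.
-/

open Finset
open scoped BigOperators Classical

noncomputable section

/-- The primitive `q`-th root of unity `ω = e^{2πi/q}`. -/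
def rootOfUnityC (q : ℕ) : ℂ := Complex.exp (2 * Real.pi * Complex.I / q)

/-- The simplex encoding of a word `x ∈ F^n`, where the alphabet `F` is identified with
`{0, …, q-1}` via the (arbitrary) bijection `e`.  The coordinate indexed by `(i, α)` is
`ω^{x_i·(α+1)}` for `i ∈ [n]`, `α + 1 ∈ {1, …, q-1}`. -/
def simplexEnc {F : Type*} {q n : ℕ} (e : F ≃ Fin q) (x : Fin n → F) :
    Fin n × Fin (q - 1) → ℂ :=
  fun p => rootOfUnityC q ^ ((e (x p.1)).val * (p.2.val + 1))

lemma sum_range_pow_succ_eq_neg_one {R : Type*} [Ring R] [NoZeroDivisors R] {z : R} {q : ℕ}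
    (hq : q ≠ 0) (hz : z ^ q = 1) (hz₁ : z ≠ 1) : ∑ m ∈ range (q - 1), z ^ (m + 1) = -1 := by
  have hgeom : ∑ m ∈ range q, z ^ m = 0 := by
    refine (mul_eq_zero.mp ?_).resolve_left (sub_ne_zero.mpr hz₁)
    rw [mul_geom_sum, hz, sub_self]
  obtain ⟨r, rfl⟩ := Nat.exists_eq_succ_of_ne_zero hq
  rw [sum_range_succ', pow_zero] at hgeom
  exact eq_neg_of_add_eq_zero_left hgeom

lemma sum_pow_mul_conj_pow {ω : ℂ} {q : ℕ} (hω : IsPrimitiveRoot ω q) (a b : Fin q) :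
    ∑ α : Fin (q - 1), ω ^ (a.val * (α.val + 1)) *
        (starRingEnd ℂ) (ω ^ (b.val * (α.val + 1))) =
      if a = b then (q : ℂ) - 1 else -1 := by
  have hq : q ≠ 0 := (Fin.pos a).ne'
  have hω₀ : ω ≠ 0 := hω.ne_zero hq
  have hconj : (starRingEnd ℂ) ω = ω⁻¹ := (Complex.inv_eq_conj (hω.norm'_eq_one hq)).symm
  set z : ℂ := ω ^ a.val / ω ^ b.val with hz
  have hterm (m : ℕ) : ω ^ (a.val * m) * (starRingEnd ℂ) (ω ^ (b.val * m)) = z ^ m := by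
    rw [map_pow, hconj, inv_pow, ← div_eq_mul_inv, pow_mul, pow_mul, div_pow]
  simp only [hterm]
  rw [Fin.sum_univ_eq_sum_range fun m => z ^ (m + 1)]
  split_ifs with hab
  · have hz₁ : z = 1 := by rw [hz, hab, div_self (pow_ne_zero _ hω₀)]
    simp [hz₁, Nat.cast_pred (Nat.pos_of_ne_zero hq)]
  · have hzq : z ^ q = 1 := by
      rw [hz, div_pow, pow_right_comm, pow_right_comm _ b.val, hω.pow_eq_one, one_pow, one_pow,
        div_one]
    have hz₁ : z ≠ 1 := fun h =>
      hab <| Fin.ext <| hω.pow_inj a.isLt b.isLt <| (div_eq_one_iff_eq (pow_ne_zero _ hω₀)).mp h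
    exact sum_range_pow_succ_eq_neg_one hq hzq hz₁

lemma sum_simplexEnc_mul_conj {F : Type*} [DecidableEq F] {q n : ℕ} (e : F ≃ Fin q)
    (x y : Fin n → F) :
    ∑ p, simplexEnc e x p * (starRingEnd ℂ) (simplexEnc e y p) =
      ((q : ℂ) - 1) * n - q * hammingDist x y := by
  have hcoord (l : Fin n) :
      ∑ α, simplexEnc e x (l, α) * (starRingEnd ℂ) (simplexEnc e y (l, α)) =
        ((q : ℂ) - 1) - q * if x l ≠ y l then 1 else 0 := by
    have hq : q ≠ 0 := (Fin.pos (e (x l))).ne'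
    have hω : IsPrimitiveRoot (rootOfUnityC q) q := Complex.isPrimitiveRoot_exp q hq
    simp only [simplexEnc, sum_pow_mul_conj_pow hω, e.injective.eq_iff, ite_not]
    split_ifs <;> ring
  simp only [Fintype.sum_prod_type, hcoord, sum_sub_distrib, ← mul_sum, sum_boole, hammingDist,
    sum_const, card_univ, Fintype.card_fin, nsmul_eq_mul]
  ring

lemma card_filter_map_eq_zero_mul_card {V W : Type*} [AddGroup V] [Fintype V]
    [AddGroup W] [Fintype W] [DecidableEq W] {f : V →+ W} (hf : Function.Surjective f) :
    #{v | f v = 0} * Fintype.card W = Fintype.card V := by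
  have hker : Nat.card f.ker = #{v | f v = 0} := by
    rw [Nat.card_eq_fintype_card, Fintype.card_subtype]
    simp only [AddMonoidHom.mem_ker]
  have hindex : f.ker.index = Fintype.card W := by
    rw [AddSubgroup.index_ker, AddMonoidHom.range_eq_top.mpr hf, AddSubgroup.card_top,
      Nat.card_eq_fintype_card]
  rw [← hker, ← hindex, f.ker.card_mul_index, Nat.card_eq_fintype_card]

section LinearForms

variable {F : Type*} [Fintype F] [DecidableEq F] (K : Type*) [Field K] [CharZero K]

lemma card_filter_linearMap_ne_div_card [DivisionRing F] {V : Type*} [AddCommGroup V] [Module F V]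
    [Fintype V] {f g : V →ₗ[F] F} (hfg : f ≠ g) :
    (#{v | f v ≠ g v} : K) / Fintype.card V = 1 - 1 / Fintype.card F := by
  have hsurj : Function.Surjective (f - g).toAddMonoidHom :=
    LinearMap.surjective (sub_ne_zero.mpr hfg)
  have hagree : (#{v | f v = g v} : K) * Fintype.card F = Fintype.card V := by
    exact_mod_cast by simpa [sub_eq_zero] using card_filter_map_eq_zero_mul_card hsurj
  have hsplit : (#{v | f v = g v} : K) + #{v | f v ≠ g v} = Fintype.card V := by
    exact_mod_cast card_filter_add_card_filter_not (s := univ) (fun v => f v = g v)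
  have hF : (Fintype.card F : K) ≠ 0 := Nat.cast_ne_zero.mpr Fintype.card_ne_zero
  have hV : (Fintype.card V : K) ≠ 0 := Nat.cast_ne_zero.mpr Fintype.card_ne_zero
  field_simp
  linear_combination (Fintype.card F : K) * hsplit - hagree

variable [Field F] {k n : Type*} [Fintype k] [DecidableEq k] {i j : k → F}

lemma card_filter_dotProduct_ne_div_card (hij : i ≠ j) :
    (#{t | t ⬝ᵥ i ≠ t ⬝ᵥ j} : K) / Fintype.card (k → F) = 1 - 1 / Fintype.card F := by
  have hforms : dotProductBilin F F i ≠ dotProductBilin F F j := fun h =>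
    hij <| dotProduct_eq i j fun t => LinearMap.congr_fun h t
  simpa only [dotProductBilin_apply_apply, dotProduct_comm i, dotProduct_comm j] using
    card_filter_linearMap_ne_div_card K hforms

variable [Fintype n] [DecidableEq n]

lemma card_filter_vecMul_ne_div_card (hij : i ≠ j) (l : n) :
    (#{G : Matrix k n F | Matrix.vecMul i G l ≠ Matrix.vecMul j G l} : K) /
        Fintype.card (Matrix k n F) = 1 - 1 / Fintype.card F := by
  let coord (x : k → F) : Matrix k n F →ₗ[F] F :=
    LinearMap.proj l ∘ₗ Matrix.vecMulBilin F F x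
  have hforms : coord i ≠ coord j := fun h =>
    hij <| dotProduct_eq i j fun t => LinearMap.congr_fun h (Matrix.of fun a _ => t a)
  exact card_filter_linearMap_ne_div_card K hforms

lemma sum_hammingDist_vecMul_div_card (hij : i ≠ j) :
    (∑ G : Matrix k n F, (hammingDist (Matrix.vecMul i G) (Matrix.vecMul j G) : K)) /
        Fintype.card (Matrix k n F) = Fintype.card n * (1 - 1 / Fintype.card F) := by
  have hswap : ∑ G : Matrix k n F, hammingDist (Matrix.vecMul i G) (Matrix.vecMul j G) =
      ∑ l, #{G : Matrix k n F | Matrix.vecMul i G l ≠ Matrix.vecMul j G l} := by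
    simp only [hammingDist, card_filter]
    exact sum_comm
  rw [← Nat.cast_sum, hswap, Nat.cast_sum, sum_div]
  simp only [card_filter_vecMul_ne_div_card K hij, sum_const, card_univ, nsmul_eq_mul]

end LinearForms

/-- let `G` be a uniformly random `k × n` matrix over the field `F` with `q`
elements (`q` a prime power).  For messages `i, j ∈ F^k` with codewords `c_i = iG`, `c_j = jG`,
the expected inner product `E⟨φ(c_i), φ(c_j)⟩` equals `(q-1)n` if `i = j` and `0` otherwise.
Moreover, for a uniformly random `t ∈ F^k` and `i ≠ j`, the probability that `⟨t,i⟩ ≠ ⟨t,j⟩`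
equals `1 - 1/q`. -/
theorem stmt3 (q k n : ℕ) (hk : 1 ≤ k) (hn : 1 ≤ n)
    (F : Type) [Field F] [Fintype F] [DecidableEq F] (hq : Fintype.card F = q)
    (e : F ≃ Fin q) (i j : Fin k → F) :
    ((∑ G : Matrix (Fin k) (Fin n) F,
        ∑ p : Fin n × Fin (q - 1),
          simplexEnc e (Matrix.vecMul i G) p *
            (starRingEnd ℂ) (simplexEnc e (Matrix.vecMul j G) p)) /
          (Fintype.card (Matrix (Fin k) (Fin n) F) : ℂ)
        = if i = j then ((q : ℂ) - 1) * n else 0)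
    ∧ (i ≠ j →
        ((Finset.univ.filter fun t : Fin k → F => ∑ a, t a * i a ≠ ∑ a, t a * j a).card : ℝ) /
            (Fintype.card (Fin k → F) : ℝ)
          = 1 - 1 / q) := by
  subst hq
  refine ⟨?_, card_filter_dotProduct_ne_div_card ℝ⟩
  have hF : (Fintype.card F : ℂ) ≠ 0 := Nat.cast_ne_zero.mpr Fintype.card_ne_zero
  have hM : (Fintype.card (Matrix (Fin k) (Fin n) F) : ℂ) ≠ 0 :=
    Nat.cast_ne_zero.mpr Fintype.card_ne_zero
  simp only [sum_simplexEnc_mul_conj, sum_sub_distrib, ← mul_sum, sum_const, card_univ,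
    nsmul_eq_mul, sub_div, mul_div_assoc, mul_div_cancel_left₀ _ hM]
  split_ifs with hij
  · simp [hij]
  · rw [sum_hammingDist_vecMul_div_card ℂ hij, Fintype.card_fin]
    field_simp
    ring
end
end

section
/- There is an absolute constant C' > 0 such that the following holds. Let q be a prime power, L ≥ 2, η ∈ [0,1], and let C = {c_1, …, c_N} ⊆ F_q^{n'} be a linear code (N ≥ 2) such that for every subset Λ ⊆ {1,…,N} with |Λ| = L, (1/binom(L,2))·Σ_{i<j ∈ Λ} d(c_i, c_j) ≥ (1 − 1/q)(1 − η). Set ε = √(4(1/L + η(1 − 1/L))). Then for every integer n ≥ C'·ln(N)/ε², the randomly punctured code E of length n obtained from C is ((1 − 1/q)(1 − ε), L − 1)-list decodable with probability at least 1 − 1/N. -/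
/-!
If the code punctured at `T` is not list decodable, some `L` codewords `Λ` all lie close to one word
`w`. Let `g_t ∈ ℝ^q` be the centred symbol counts of `Λ` at coordinate `t`, its *profile*. Pairing
profiles with `w` shows `∑ j, ‖g_{T j}‖ ≥ √(1 - 1/q) · n L ε`, while the hypothesis on pairwise
distances gives, as in the Johnson bound, `𝔼 t, ‖g_t‖ ≤ √(1 - 1/q) · L ε / 2`. So failure means that
for some `Λ` an empirical mean deviates from its expectation.

A union bound over the `Λ` would lose a factor `L` in `n`. Instead `‖g_t‖` is replaced by its random
projection `|⟪σ, g_t⟫|` with uniform signs `σ ∈ {±1}^q`; by Khintchine's inequality this loses a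
factor `√3 < 2`, so a gap remains. For fixed `σ`, symmetrization and contraction replace the
absolute values by random signs. What is left is linear in `g_t`, hence a sum over `i ∈ Λ`, at most
`L` times its largest term, so a union bound over the `N` codewords and Hoeffding's estimate
`cosh x ≤ exp (x ^ 2 / 2)` suffice. Jensen's inequality over `σ` and Markov's inequality bound the
probability of failure by `N exp (-n ε² / 51200)`.
-/

open Finset
open scoped BigOperators Classical

noncomputable section

open Real
open scoped RealInnerProductSpace

/-! ### Uniform expectations -/

section Expectation

variable {α τ : Type*} [Fintype α] [Fintype τ]

lemma dens_filter_mul_le_expect {f : α → ℝ} (hf : ∀ x, 0 ≤ f x) (P : α → Prop) [DecidablePred P]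
    {a : ℝ} (h : ∀ x, P x → a ≤ f x) : (dens {x | P x} : ℝ) * a ≤ 𝔼 x, f x := by
  rw [nnratCast_dens, Fintype.expect_eq_sum_div_card, div_mul_eq_mul_div]
  gcongr
  calc (#{x | P x} : ℝ) * a = #{x | P x} • a := (nsmul_eq_mul ..).symm
    _ ≤ ∑ x with P x, f x := card_nsmul_le_sum _ _ _ fun x hx => h x (mem_filter.1 hx).2
    _ ≤ ∑ x, f x := sum_le_univ_sum_of_nonneg hf

lemma expect_le_sqrt_expect_sq (f : α → ℝ) : 𝔼 x, f x ≤ √(𝔼 x, f x ^ 2) := by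
  rcases isEmpty_or_nonempty α with _ | _
  · simp [expect]
  refine le_sqrt_of_sq_le ?_
  simpa using expect_mul_sq_le_sq_mul_sq univ f 1

lemma exp_expect_le [Nonempty α] (f : α → ℝ) : exp (𝔼 x, f x) ≤ 𝔼 x, exp (f x) := by
  simpa [Fintype.expect_eq_sum_div_card, div_eq_inv_mul, mul_sum] using
    convexOn_exp.map_sum_le (t := (univ : Finset α)) (w := fun _ => (Fintype.card α : ℝ)⁻¹)
      (p := f) (fun _ _ => by positivity) (by simp) (fun _ _ => Set.mem_univ _)

/-- Hölder's inequality with exponents `3 / 2` and `3`. -/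
lemma expect_sq_pow_three_le (f : α → ℝ) :
    (𝔼 x, f x ^ 2) ^ 3 ≤ (𝔼 x, |f x|) ^ 2 * 𝔼 x, f x ^ 4 := by
  have holder := compact_inner_le_weight_mul_Lp_of_nonneg univ (p := 3) (by norm_num)
    (w := fun x => |f x|) (f := fun x => |f x|) (fun _ => abs_nonneg _) (fun _ => abs_nonneg _)
  have mean_nonneg : 0 ≤ 𝔼 x, |f x| := expect_nonneg fun _ _ => abs_nonneg _
  have fourth_nonneg : 0 ≤ 𝔼 x, f x ^ 4 := expect_nonneg fun _ _ => by positivity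
  have second (x : α) : |f x| * |f x| = f x ^ 2 := by rw [abs_mul_abs_self, sq]
  have fourth (x : α) : |f x| * |f x| ^ (3 : ℝ) = f x ^ 4 := by
    rw [show (3 : ℝ) = (3 : ℕ) by norm_num, rpow_natCast, ← pow_succ', (by decide : Even 4).pow_abs]
  simp only [second, fourth] at holder
  calc (𝔼 x, f x ^ 2) ^ 3
      ≤ ((𝔼 x, |f x|) ^ (1 - 3⁻¹ : ℝ) * (𝔼 x, f x ^ 4) ^ (3⁻¹ : ℝ)) ^ 3 := by gcongr
    _ = (𝔼 x, |f x|) ^ 2 * 𝔼 x, f x ^ 4 := by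
      rw [mul_pow, ← rpow_mul_natCast mean_nonneg, ← rpow_mul_natCast fourth_nonneg]
      norm_num

lemma expect_fin_succ {n : ℕ} (G : (Fin (n + 1) → τ) → ℝ) :
    𝔼 T, G T = 𝔼 T : Fin n → τ, 𝔼 t, G (Fin.cons t T) := by
  rw [expect_comm, ← expect_product', univ_product_univ]
  exact (Fintype.expect_equiv (Fin.consEquiv fun _ => τ) _ _ fun _ => rfl).symm

lemma expect_prod_eq_pow (n : ℕ) (g : τ → ℝ) :
    𝔼 T : Fin n → τ, ∏ j, g (T j) = (𝔼 t, g t) ^ n := by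
  rw [expect_pow, Fintype.piFinset_univ]

lemma expect_intUnits (g : ℤˣ → ℝ) : 𝔼 s, g s = (g 1 + g (-1)) / 2 := by
  rw [Fintype.expect_eq_sum_div_card, UnitsInt.univ, sum_pair (by decide)]
  norm_num

/-- The samples are exchanged one at a time, the others being part of the offset. -/
lemma expect_comp_sum_le {κ G : Type*} [Fintype κ] [AddCommMonoid G] {Φ : G → ℝ} {v : τ → G}
    {w : κ → G} (step : ∀ f, 𝔼 t, Φ (f + v t) ≤ 𝔼 e, Φ (f + w e)) (n : ℕ) (f : G) :
    𝔼 T : Fin n → τ, Φ (f + ∑ j, v (T j)) ≤ 𝔼 U : Fin n → κ, Φ (f + ∑ j, w (U j)) := by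
  induction n generalizing f with
  | zero => simp
  | succ n ih =>
    simp only [expect_fin_succ, Fin.sum_univ_succ, Fin.cons_zero, Fin.cons_succ]
    calc 𝔼 T : Fin n → τ, 𝔼 t, Φ (f + (v t + ∑ j, v (T j)))
        = 𝔼 t, 𝔼 T : Fin n → τ, Φ (f + v t + ∑ j, v (T j)) := by
          rw [expect_comm]; simp only [add_assoc]
      _ ≤ 𝔼 t, 𝔼 U : Fin n → κ, Φ (f + v t + ∑ j, w (U j)) := expect_le_expect fun t _ => ih _
      _ = 𝔼 U : Fin n → κ, 𝔼 t, Φ (f + ∑ j, w (U j) + v t) := by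
          rw [expect_comm]; simp only [add_right_comm]
      _ ≤ 𝔼 U : Fin n → κ, 𝔼 e, Φ (f + ∑ j, w (U j) + w e) := expect_le_expect fun U _ => step _
      _ = 𝔼 U : Fin n → κ, 𝔼 e, Φ (f + (w e + ∑ j, w (U j))) := by
          simp only [add_assoc, add_comm (w _)]

end Expectation

/-! ### Khintchine's inequality -/

section Khintchine

lemma sq_intUnits_cast (s : ℤˣ) : ((s : ℤ) : ℝ) ^ 2 = 1 := by
  rcases Int.units_eq_one_or s with rfl | rfl <;> simp

lemma sum_sign_mul_update {α : Type*} [DecidableEq α] {s : Finset α} {a : α} (ha : a ∉ s)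
    (g : α → ℝ) (σ : α → ℤˣ) (u : ℤˣ) :
    ∑ x ∈ s, ((Function.update σ a u x : ℤ) : ℝ) * g x = ∑ x ∈ s, ((σ x : ℤ) : ℝ) * g x :=
  sum_congr rfl fun x hx => by rw [Function.update_of_ne (ne_of_mem_of_not_mem hx ha)]

variable {α : Type*} [Fintype α]

/-- The vector of a family of signs. For uniformly random `σ`, the projection `⟪signVec σ, g⟫` is
the Rademacher sum `∑ x, ± g x`. -/
def signVec (σ : α → ℤˣ) : EuclideanSpace ℝ α := WithLp.toLp 2 fun x => ((σ x : ℤ) : ℝ)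

lemma inner_signVec (σ : α → ℤˣ) (g : EuclideanSpace ℝ α) :
    ⟪signVec σ, g⟫ = ∑ x, ((σ x : ℤ) : ℝ) * g x := by
  simp [signVec, PiLp.inner_apply, mul_comm]

variable [DecidableEq α]

/-- Flipping the sign at `a` negates the summand. -/
lemma expect_sign_mul_eq_zero {a : α} {G : (α → ℤˣ) → ℝ}
    (hG : ∀ σ s, G (Function.update σ a s) = G σ) : 𝔼 σ, ((σ a : ℤ) : ℝ) * G σ = 0 := by
  have flip : Function.Involutive fun σ : α → ℤˣ => Function.update σ a (-σ a) := fun σ => by simp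
  have := Fintype.expect_bijective _ flip.bijective
    (fun σ => ((σ a : ℤ) : ℝ) * G σ) (fun σ => -(((σ a : ℤ) : ℝ) * G σ)) fun σ => by simp [hG]
  rw [expect_neg_distrib] at this
  linarith

lemma expect_sum_sign_mul_sq (g : α → ℝ) (s : Finset α) :
    𝔼 σ : α → ℤˣ, (∑ x ∈ s, ((σ x : ℤ) : ℝ) * g x) ^ 2 = ∑ x ∈ s, g x ^ 2 := by
  induction s using Finset.induction_on with
  | empty => simp
  | insert a s ha ih =>
    have cross : 𝔼 σ : α → ℤˣ, ((σ a : ℤ) : ℝ) * (2 * g a * ∑ x ∈ s, ((σ x : ℤ) : ℝ) * g x) = 0 :=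
      expect_sign_mul_eq_zero fun σ u => by rw [sum_sign_mul_update ha]
    have expand (σ : α → ℤˣ) : (∑ x ∈ insert a s, ((σ x : ℤ) : ℝ) * g x) ^ 2
        = g a ^ 2 + ((σ a : ℤ) : ℝ) * (2 * g a * ∑ x ∈ s, ((σ x : ℤ) : ℝ) * g x)
          + (∑ x ∈ s, ((σ x : ℤ) : ℝ) * g x) ^ 2 := by
      rw [sum_insert ha]
      linear_combination g a ^ 2 * sq_intUnits_cast (σ a)
    simp only [expand, expect_add_distrib, Fintype.expect_const, cross, ih, add_zero]
    rw [sum_insert ha]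

lemma expect_sum_sign_mul_pow_four_le (g : α → ℝ) (s : Finset α) :
    𝔼 σ : α → ℤˣ, (∑ x ∈ s, ((σ x : ℤ) : ℝ) * g x) ^ 4 ≤ 3 * (∑ x ∈ s, g x ^ 2) ^ 2 := by
  induction s using Finset.induction_on with
  | empty => simp
  | insert a s ha ih =>
    set X : (α → ℤˣ) → ℝ := fun σ => ∑ x ∈ s, ((σ x : ℤ) : ℝ) * g x with hX
    have cross : 𝔼 σ : α → ℤˣ, ((σ a : ℤ) : ℝ) * (4 * g a ^ 3 * X σ + 4 * g a * X σ ^ 3) = 0 :=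
      expect_sign_mul_eq_zero fun σ u => by simp only [hX, sum_sign_mul_update ha]
    have expand (σ : α → ℤˣ) : (∑ x ∈ insert a s, ((σ x : ℤ) : ℝ) * g x) ^ 4
        = g a ^ 4 + 6 * g a ^ 2 * X σ ^ 2 + X σ ^ 4
          + ((σ a : ℤ) : ℝ) * (4 * g a ^ 3 * X σ + 4 * g a * X σ ^ 3) := by
      have h := sq_intUnits_cast (σ a)
      set e := ((σ a : ℤ) : ℝ)
      rw [sum_insert ha]
      linear_combination (g a ^ 4 * (e ^ 2 + 1) + 6 * g a ^ 2 * X σ ^ 2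
        + 4 * e * g a ^ 3 * X σ) * h
    have second : 𝔼 σ, X σ ^ 2 = ∑ x ∈ s, g x ^ 2 := expect_sum_sign_mul_sq g s
    simp only [expand, expect_add_distrib, Fintype.expect_const, cross, ← mul_expect, second]
    rw [sum_insert ha]
    nlinarith [pow_nonneg (sq_nonneg (g a)) 2]

lemma expect_inner_signVec_sq (g : EuclideanSpace ℝ α) :
    𝔼 σ, ⟪signVec σ, g⟫ ^ 2 = ‖g‖ ^ 2 := by
  simp only [inner_signVec, expect_sum_sign_mul_sq, EuclideanSpace.real_norm_sq_eq]

lemma expect_inner_signVec_pow_four_le (g : EuclideanSpace ℝ α) :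
    𝔼 σ, ⟪signVec σ, g⟫ ^ 4 ≤ 3 * ‖g‖ ^ 4 := by
  have := expect_sum_sign_mul_pow_four_le g univ
  rw [← EuclideanSpace.real_norm_sq_eq, ← pow_mul] at this
  simpa only [inner_signVec] using this

lemma expect_abs_inner_signVec_le (g : EuclideanSpace ℝ α) :
    𝔼 σ, |⟪signVec σ, g⟫| ≤ ‖g‖ := by
  simpa [expect_inner_signVec_sq] using expect_le_sqrt_expect_sq fun σ => |⟪signVec σ, g⟫|

/-- Khintchine's inequality, from the second and fourth moments. -/
lemma norm_le_sqrt_three_mul_expect_abs_inner_signVec (g : EuclideanSpace ℝ α) :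
    ‖g‖ ≤ √3 * 𝔼 σ, |⟪signVec σ, g⟫| := by
  rcases (norm_nonneg g).eq_or_lt with hg | hg
  · rw [← hg]; positivity
  have moments : ‖g‖ ^ 4 * ‖g‖ ^ 2 ≤ ‖g‖ ^ 4 * (3 * (𝔼 σ, |⟪signVec σ, g⟫|) ^ 2) := by
    calc ‖g‖ ^ 4 * ‖g‖ ^ 2 = (𝔼 σ, ⟪signVec σ, g⟫ ^ 2) ^ 3 := by
          rw [expect_inner_signVec_sq]; ring
      _ ≤ (𝔼 σ, |⟪signVec σ, g⟫|) ^ 2 * 𝔼 σ, ⟪signVec σ, g⟫ ^ 4 := expect_sq_pow_three_le _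
      _ ≤ (𝔼 σ, |⟪signVec σ, g⟫|) ^ 2 * (3 * ‖g‖ ^ 4) := by
          gcongr; exact expect_inner_signVec_pow_four_le g
      _ = _ := by ring
  have mean_nonneg : 0 ≤ 𝔼 σ, |⟪signVec σ, g⟫| := expect_nonneg fun _ _ => abs_nonneg _
  rw [← sqrt_sq mean_nonneg, ← sqrt_mul zero_le_three]
  exact le_sqrt_of_sq_le (le_of_mul_le_mul_left moments (by positivity))

/-- Averaging over the signs turns norms into absolute projections, at the cost of Khintchine's
constant on the samples and at no cost on the mean. -/
lemma sum_norm_div_sub_le_expect_sum_abs_inner_signVec {τ : Type*} [Fintype τ]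
    (p : τ → EuclideanSpace ℝ α) {n : ℕ} (T : Fin n → τ) :
    (∑ j, ‖p (T j)‖) / √3 - n * 𝔼 t, ‖p t‖
      ≤ 𝔼 σ, (∑ j, |⟪signVec σ, p (T j)⟫| - n * 𝔼 t, |⟪signVec σ, p t⟫|) := by
  have samples : (∑ j, ‖p (T j)‖) / √3 ≤ 𝔼 σ, ∑ j, |⟪signVec σ, p (T j)⟫| := by
    rw [expect_sum_comm, sum_div]
    refine sum_le_sum fun j _ => (div_le_iff₀' (by positivity)).2 ?_
    exact norm_le_sqrt_three_mul_expect_abs_inner_signVec _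
  have mean : 𝔼 σ, 𝔼 t, |⟪signVec σ, p t⟫| ≤ 𝔼 t, ‖p t‖ := by
    rw [expect_comm]
    exact expect_le_expect fun t _ => expect_abs_inner_signVec_le _
  rw [expect_sub_distrib, ← mul_expect]
  gcongr

end Khintchine

/-! ### Symmetrization and contraction -/

section SupExp

variable {K τ : Type*}

/-- The exponential of the maximal coordinate of `f`, or `0` if there are no coordinates. Its
expectation over a random `f` is an exponential moment of the maximum. -/
def supExp (f : K → ℝ) : ℝ := ⨆ k, exp (f k)

lemma supExp_nonneg (f : K → ℝ) : 0 ≤ supExp f := Real.iSup_nonneg fun _ => (exp_pos _).le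

lemma supExp_le {f : K → ℝ} {b : ℝ} (hf : ∀ k, exp (f k) ≤ b) (hb : 0 ≤ b) : supExp f ≤ b :=
  Real.iSup_le hf hb

variable [Finite K]

lemma exp_le_supExp (f : K → ℝ) (k : K) : exp (f k) ≤ supExp f :=
  le_ciSup (f := fun k => exp (f k)) (Set.finite_range _).bddAbove k

lemma supExp_mono : Monotone (supExp : (K → ℝ) → ℝ) := fun _ g hfg =>
  supExp_le (fun k => (exp_le_exp.2 (hfg k)).trans (exp_le_supExp g k)) (supExp_nonneg g)

lemma supExp_add_sub_le (f u v : K → ℝ) :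
    supExp (f + (u - v)) ≤ (supExp (f + (2 : ℝ) • u) + supExp (f - (2 : ℝ) • v)) / 2 := by
  refine supExp_le (fun k => ?_)
    (div_nonneg (add_nonneg (supExp_nonneg _) (supExp_nonneg _)) zero_le_two)
  have midpoint : (f + (u - v)) k
      = (1 / 2 : ℝ) • (f + (2 : ℝ) • u) k + (1 / 2 : ℝ) • (f - (2 : ℝ) • v) k := by
    simp only [Pi.add_apply, Pi.sub_apply, Pi.smul_apply, smul_eq_mul]; ring
  calc exp ((f + (u - v)) k)
      ≤ (1 / 2 : ℝ) • exp ((f + (2 : ℝ) • u) k) + (1 / 2 : ℝ) • exp ((f - (2 : ℝ) • v) k) := by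
        rw [midpoint]
        exact convexOn_exp.2 trivial trivial (by norm_num) (by norm_num) (by norm_num)
    _ ≤ (supExp (f + (2 : ℝ) • u) + supExp (f - (2 : ℝ) • v)) / 2 := by
        simp only [smul_eq_mul]
        linarith [exp_le_supExp (f + (2 : ℝ) • u) k, exp_le_supExp (f - (2 : ℝ) • v) k]

variable [Fintype τ]

lemma supExp_expect_le [Nonempty τ] (f : τ → K → ℝ) : supExp (𝔼 t, f t) ≤ 𝔼 t, supExp (f t) :=
  supExp_le (fun k => by
    rw [Finset.expect_apply]
    exact (exp_expect_le _).trans (expect_le_expect fun t _ => exp_le_supExp (f t) k))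
    (expect_nonneg fun t _ => supExp_nonneg (f t))

/-- Symmetrization: the mean is replaced by an independent copy, and the convexity of `exp`
separates the two copies. -/
lemma expect_supExp_add_sub_expect_le (v : τ → K → ℝ) (f : K → ℝ) :
    𝔼 t, supExp (f + (v t - 𝔼 t', v t')) ≤ 𝔼 t, 𝔼 s : ℤˣ, supExp (f + s • (2 : ℝ) • v t) := by
  rcases isEmpty_or_nonempty τ with _ | _
  · simp
  calc 𝔼 t, supExp (f + (v t - 𝔼 t', v t'))
      = 𝔼 t, supExp (𝔼 t', (f + (v t - v t'))) := by
        simp only [expect_add_distrib, expect_sub_distrib, Fintype.expect_const]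
    _ ≤ 𝔼 t, 𝔼 t', (supExp (f + (2 : ℝ) • v t) + supExp (f - (2 : ℝ) • v t')) / 2 :=
        expect_le_expect fun t _ => (supExp_expect_le _).trans
          (expect_le_expect fun t' _ => supExp_add_sub_le f (v t) (v t'))
    _ = 𝔼 t, 𝔼 s : ℤˣ, supExp (f + s • (2 : ℝ) • v t) := by
        simp only [expect_intUnits, ← expect_div, expect_add_distrib, Fintype.expect_const,
          one_smul, Units.neg_smul, sub_eq_add_neg]

lemma supExp_add_abs_le_max (f v : K → ℝ) :
    supExp (f + |v|) ≤ max (supExp (f + v)) (supExp (f - v)) :=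
  supExp_le (fun k => by
    rcases abs_choice (v k) with h | h
    · exact le_max_of_le_left (by simpa [h] using exp_le_supExp (f + v) k)
    · exact le_max_of_le_right (by simpa [h, sub_eq_add_neg] using exp_le_supExp (f - v) k))
    (le_max_of_le_left (supExp_nonneg _))

/-- Contraction for the absolute value: the sign `+` costs at most the larger, and the sign `-` at
most the smaller, of the two terms on the right. -/
lemma expect_supExp_add_smul_abs_le (f v : K → ℝ) :
    𝔼 s : ℤˣ, supExp (f + s • |v|) ≤ 𝔼 s : ℤˣ, supExp (f + s • v) := by
  simp only [expect_intUnits, one_smul, Units.neg_smul, ← sub_eq_add_neg]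
  have minus : supExp (f - |v|) ≤ min (supExp (f + v)) (supExp (f - v)) := le_min
    (supExp_mono fun k => by simpa [sub_eq_add_neg] using neg_abs_le (v k))
    (supExp_mono (sub_le_sub_left (le_abs_self v) f))
  linarith [supExp_add_abs_le_max f v, max_add_min (supExp (f + v)) (supExp (f - v))]

/-- For independent uniform samples, the deviation of `|v|` from its mean has the exponential moment
bound of the signed sums of `v`, in which no absolute value is left. -/
lemma expect_supExp_sum_abs_sub_expect_le (v : τ → K → ℝ) (n : ℕ) :
    𝔼 T : Fin n → τ, supExp (∑ j, (|v (T j)| - 𝔼 t, |v t|))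
      ≤ 𝔼 U : Fin n → τ × ℤˣ, supExp (∑ j, (U j).2 • (2 : ℝ) • v (U j).1) := by
  have step (f : K → ℝ) : 𝔼 t, supExp (f + (|v t| - 𝔼 t', |v t'|))
      ≤ 𝔼 e : τ × ℤˣ, supExp (f + e.2 • (2 : ℝ) • v e.1) := by
    rw [← univ_product_univ, expect_product]
    refine (expect_supExp_add_sub_expect_le _ f).trans (expect_le_expect fun t _ => ?_)
    have abs_two_smul : |(2 : ℝ) • v t| = (2 : ℝ) • |v t| := by ext; simp
    simpa only [abs_two_smul] using expect_supExp_add_smul_abs_le f ((2 : ℝ) • v t)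
  simpa only [zero_add] using expect_comp_sum_le step n 0

lemma expect_exp_sum_sign_smul_le {y : τ → ℝ} {b : ℝ} (hy : ∀ t, |y t| ≤ b) (n : ℕ) :
    𝔼 U : Fin n → τ × ℤˣ, exp (∑ j, (U j).2 • y (U j).1) ≤ exp (n * (b ^ 2 / 2)) := by
  have single (t : τ) : 𝔼 s : ℤˣ, exp (s • y t) ≤ exp (b ^ 2 / 2) := by
    simp only [expect_intUnits, one_smul, Units.neg_smul, ← cosh_eq]
    refine (cosh_le_exp_half_sq _).trans (exp_le_exp.2 ?_)
    gcongr ?_ / 2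
    exact sq_le_sq.2 ((hy t).trans (le_abs_self b))
  simp only [exp_sum]
  rw [expect_prod_eq_pow n fun e : τ × ℤˣ => exp (e.2 • y e.1), exp_nat_mul]
  gcongr
  rw [← univ_product_univ, expect_product]
  rcases isEmpty_or_nonempty τ with _ | _
  · simpa using (exp_pos _).le
  · exact expect_le univ_nonempty fun t _ => single t

end SupExp

/-! ### Deviations of sums over lists -/

section ListDeviation

variable {I τ Ω : Type*} {L : ℕ}

/-- The sums of `y` over all lists, a list being a set of `L` indices. -/
def listSum (L : ℕ) : (I → ℝ) →ₗ[ℝ] ({Λ : Finset I // #Λ = L} → ℝ) :=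
  LinearMap.pi fun Λ => ∑ i ∈ Λ.1, LinearMap.proj i

lemma listSum_apply (y : I → ℝ) (Λ : {Λ : Finset I // #Λ = L}) :
    listSum L y Λ = ∑ i ∈ Λ.1, y i := by
  simp [listSum]

/-- Each list sum is at most `L` times its largest term, so this is a union bound over the indices
and not over the lists. -/
lemma supExp_listSum_le [Fintype I] (hL : L ≠ 0) (y : I → ℝ) :
    supExp (listSum L y) ≤ ∑ i, exp (L * y i) := by
  refine supExp_le (fun ⟨Λ, hΛ⟩ => ?_) (sum_nonneg fun i _ => (exp_pos _).le)
  subst hΛ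
  obtain ⟨i, -, hi⟩ := exists_max_image Λ y (card_ne_zero.1 hL)
  calc exp (listSum #Λ y ⟨Λ, rfl⟩) ≤ exp (#Λ * y i) := by
        rw [listSum_apply, ← nsmul_eq_mul]
        exact exp_le_exp.2 (sum_le_card_nsmul Λ y _ hi)
    _ ≤ ∑ i, exp (#Λ * y i) :=
        single_le_sum (f := fun i => exp (#Λ * y i)) (fun i _ => (exp_pos _).le) (mem_univ i)

variable [Fintype τ]

/-- The sum of the absolute list sums of `x` over the samples `T`, minus its expectation, as a
function of the list. -/
def listDeviation (L : ℕ) (x : τ → I → ℝ) {n : ℕ} (T : Fin n → τ) :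
    {Λ : Finset I // #Λ = L} → ℝ :=
  ∑ j, (|listSum L (x (T j))| - 𝔼 t, |listSum L (x t)|)

lemma listDeviation_apply (x : τ → I → ℝ) {n : ℕ} (T : Fin n → τ)
    (Λ : {Λ : Finset I // #Λ = L}) :
    listDeviation L x T Λ = ∑ j, |listSum L (x (T j)) Λ| - n * 𝔼 t, |listSum L (x t) Λ| := by
  simp [listDeviation, sum_sub_distrib]

lemma listDeviation_smul {l : ℝ} (hl : 0 ≤ l) (x : τ → I → ℝ) {n : ℕ} (T : Fin n → τ) :
    listDeviation L (l • x) T = l • listDeviation L x T := by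
  ext Λ
  simp only [listDeviation_apply, Pi.smul_apply, map_smul, smul_eq_mul, abs_mul, abs_of_nonneg hl,
    ← mul_sum, ← mul_expect]
  ring

variable [Fintype I]

lemma expect_supExp_listDeviation_le (hL : L ≠ 0) {x : τ → I → ℝ} {b : ℝ}
    (hx : ∀ t i, |x t i| ≤ b) (n : ℕ) :
    𝔼 T : Fin n → τ, supExp (listDeviation L x T)
      ≤ Fintype.card I * exp (2 * n * (L * b) ^ 2) := by
  have linear (U : Fin n → τ × ℤˣ) : ∑ j, (U j).2 • (2 : ℝ) • listSum L (x (U j).1)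
      = listSum L (∑ j, (U j).2 • (2 : ℝ) • x (U j).1) := by
    simp only [map_sum, Units.smul_def, map_zsmul, map_smul]
  have scale (U : Fin n → τ × ℤˣ) (i : I) : L * (∑ j, (U j).2 • (2 : ℝ) • x (U j).1) i
      = ∑ j, (U j).2 • (2 * L * x (U j).1 i) := by
    simp only [Finset.sum_apply, mul_sum, Pi.smul_apply, Units.smul_def]
    exact sum_congr rfl fun j _ => by simp only [zsmul_eq_mul, smul_eq_mul]; ring
  calc 𝔼 T : Fin n → τ, supExp (listDeviation L x T)
      ≤ 𝔼 U : Fin n → τ × ℤˣ, supExp (∑ j, (U j).2 • (2 : ℝ) • listSum L (x (U j).1)) :=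
        expect_supExp_sum_abs_sub_expect_le (fun t => listSum L (x t)) n
    _ ≤ 𝔼 U : Fin n → τ × ℤˣ, ∑ i, exp (∑ j, (U j).2 • (2 * L * x (U j).1 i)) :=
        expect_le_expect fun U _ => by
          simpa only [linear, scale] using
            supExp_listSum_le hL (∑ j, (U j).2 • (2 : ℝ) • x (U j).1)
    _ = ∑ i, 𝔼 U : Fin n → τ × ℤˣ, exp (∑ j, (U j).2 • (2 * L * x (U j).1 i)) :=
        expect_sum_comm ..
    _ ≤ ∑ i : I, exp (n * ((2 * L * b) ^ 2 / 2)) := sum_le_sum fun i _ =>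
        expect_exp_sum_sign_smul_le (y := fun t => 2 * L * x t i) (fun t => by
          rw [abs_mul, abs_of_nonneg (by positivity : (0 : ℝ) ≤ 2 * L)]
          gcongr
          exact hx t i) n
    _ = Fintype.card I * exp (2 * n * (L * b) ^ 2) := by
        rw [sum_const, nsmul_eq_mul, card_univ]
        ring_nf

lemma dens_le_expect_listDeviation_mul_exp_le [Fintype Ω] [Nonempty Ω] (x : Ω → τ → I → ℝ) {l : ℝ}
    (hl : 0 ≤ l) (n : ℕ) (a : ℝ) :
    (dens {T : Fin n → τ | ∃ Λ, a ≤ 𝔼 ω, listDeviation L (x ω) T Λ} : ℝ) * exp (l * a)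
      ≤ 𝔼 ω, 𝔼 T : Fin n → τ, supExp (listDeviation L (l • x ω) T) := by
  rw [expect_comm]
  refine dens_filter_mul_le_expect (fun T => expect_nonneg fun ω _ => supExp_nonneg _) _ ?_
  rintro T ⟨Λ, hΛ⟩
  calc exp (l * a) ≤ exp (𝔼 ω, listDeviation L (l • x ω) T Λ) := by
        simp only [listDeviation_smul hl, Pi.smul_apply, smul_eq_mul, ← mul_expect]
        gcongr
    _ ≤ 𝔼 ω, exp (listDeviation L (l • x ω) T Λ) := exp_expect_le _
    _ ≤ 𝔼 ω, supExp (listDeviation L (l • x ω) T) := expect_le_expect fun ω _ => exp_le_supExp _ Λ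

lemma dens_le_expect_listDeviation_le [Fintype Ω] [Nonempty Ω] (hL : L ≠ 0) {x : Ω → τ → I → ℝ}
    {b δ : ℝ} (hb : 0 < b) (hδ : 0 ≤ δ) (hx : ∀ ω t i, |x ω t i| ≤ b) (n : ℕ) :
    (dens {T : Fin n → τ | ∃ Λ, n * (L * δ) ≤ 𝔼 ω, listDeviation L (x ω) T Λ} : ℝ)
      ≤ Fintype.card I * exp (-(n * δ ^ 2 / (8 * b ^ 2))) := by
  have hL' : (L : ℝ) ≠ 0 := by exact_mod_cast hL
  -- This `l` minimizes the exponent `2 * n * (L * (l * b)) ^ 2 - l * (n * (L * δ))`.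
  set l : ℝ := δ / (4 * L * b ^ 2)
  have hl : 0 ≤ l := by positivity
  have scaled_bound (ω : Ω) (t : τ) (i : I) : |(l • x ω) t i| ≤ l * b := by
    rw [Pi.smul_apply, Pi.smul_apply, smul_eq_mul, abs_mul, abs_of_nonneg hl]
    gcongr
    exact hx ω t i
  have moment : 𝔼 ω, 𝔼 T : Fin n → τ, supExp (listDeviation L (l • x ω) T)
      ≤ Fintype.card I * exp (2 * n * (L * (l * b)) ^ 2) :=
    expect_le univ_nonempty fun ω _ => expect_supExp_listDeviation_le hL (scaled_bound ω) n
  calc (dens {T : Fin n → τ | ∃ Λ, n * (L * δ) ≤ 𝔼 ω, listDeviation L (x ω) T Λ} : ℝ)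
      ≤ Fintype.card I * exp (2 * n * (L * (l * b)) ^ 2) / exp (l * (n * (L * δ))) :=
        (le_div_iff₀ (exp_pos _)).2
          ((dens_le_expect_listDeviation_mul_exp_le x hl n _).trans moment)
    _ = Fintype.card I * exp (-(n * δ ^ 2 / (8 * b ^ 2))) := by
        rw [mul_div_assoc, ← exp_sub]
        congr 2
        simp only [l]
        field_simp
        ring

end ListDeviation

/-! ### Profiles of lists -/

section Profile

variable {F : Type*} [Fintype F] [DecidableEq F]

/-- The vector of the symbol `x`: the standard basis vector `e_x`, recentred so that its coordinates
sum to zero. Over all symbols these are the vertices of a regular simplex. -/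
def simplexVec (x : F) : EuclideanSpace ℝ F :=
  EuclideanSpace.single x 1 - WithLp.toLp 2 fun _ => 1 / (Fintype.card F : ℝ)

lemma inner_simplexVec [Nonempty F] (x y : F) :
    ⟪simplexVec x, simplexVec y⟫ = (if x = y then 1 else 0) - 1 / (Fintype.card F : ℝ) := by
  have : (Fintype.card F : ℝ) ≠ 0 := by simp
  simp only [simplexVec, inner_sub_left, inner_sub_right, EuclideanSpace.inner_single_left,
    EuclideanSpace.inner_single_right, PiLp.single_apply, eq_comm (a := y)]
  simp only [PiLp.inner_apply, RCLike.inner_apply, conj_trivial, sum_const, card_univ,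
    nsmul_eq_mul, one_mul]
  field_simp
  ring

lemma norm_simplexVec [Nonempty F] (x : F) : ‖simplexVec x‖ = √(1 - 1 / (Fintype.card F : ℝ)) := by
  rw [norm_eq_sqrt_real_inner, inner_simplexVec, if_pos rfl]

lemma abs_inner_signVec_simplexVec_le (σ : F → ℤˣ) (x : F) :
    |⟪signVec σ, simplexVec x⟫| ≤ 2 := by
  have abs_sign (a : F) : |((σ a : ℤ) : ℝ)| = 1 := by
    rcases Int.units_eq_one_or (σ a) with h | h <;> simp [h]
  have nonempty : Nonempty F := ⟨x⟩
  have split : ⟪signVec σ, simplexVec x⟫ = ((σ x : ℤ) : ℝ) - 𝔼 a, ((σ a : ℤ) : ℝ) := by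
    simp [inner_signVec, simplexVec, mul_sub, sum_sub_distrib,
      Fintype.expect_eq_sum_div_card, sum_mul, div_eq_mul_inv]
  have mean : |𝔼 a, ((σ a : ℤ) : ℝ)| ≤ 1 :=
    (abs_expect_le univ _).trans (by simp only [abs_sign, Fintype.expect_const, le_refl])
  rw [split]
  linarith [abs_sub ((σ x : ℤ) : ℝ) (𝔼 a, ((σ a : ℤ) : ℝ)), abs_sign x]

lemma sum_inner_simplexVec [Nonempty F] {n : ℕ} (x y : Fin n → F) :
    ∑ t, ⟪simplexVec (x t), simplexVec (y t)⟫
      = n * (1 - 1 / (Fintype.card F : ℝ) - relDist x y) := by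
  have agreement : (#{t | x t = y t} : ℝ) = n - hammingDist x y := by
    rw [eq_sub_iff_add_eq]
    exact_mod_cast (card_filter_add_card_filter_not fun t => x t = y t).trans (card_fin n)
  simp only [inner_simplexVec, sum_sub_distrib, sum_boole, agreement, sum_const, card_univ,
    Fintype.card_fin, nsmul_eq_mul, relDist]
  rcases eq_or_ne n 0 with rfl | hn
  · simp [Subsingleton.elim x y]
  · field_simp
    ring

variable {ι τ : Type*}

/-- The centred symbol counts at coordinate `t` of the words in the list `Λ`: the entry at `x` is
the number of `i ∈ Λ` with `c i t = x`, minus `#Λ / card F`. -/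
def profile (c : ι → τ → F) (Λ : Finset ι) (t : τ) : EuclideanSpace ℝ F :=
  ∑ i ∈ Λ, simplexVec (c i t)

lemma sum_inner_profile [Nonempty F] {n : ℕ} (c : ι → Fin n → F) (Λ : Finset ι) (w : Fin n → F) :
    ∑ t, ⟪profile c Λ t, simplexVec (w t)⟫
      = ∑ i ∈ Λ, n * (1 - 1 / (Fintype.card F : ℝ) - relDist (c i) w) := by
  simp only [profile, sum_inner, ← sum_inner_simplexVec]
  exact sum_comm

lemma sum_norm_profile_sq [Nonempty F] {n : ℕ} (c : ι → Fin n → F) (Λ : Finset ι) :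
    ∑ t, ‖profile c Λ t‖ ^ 2
      = n * (#Λ ^ 2 * (1 - 1 / (Fintype.card F : ℝ)) - ∑ i ∈ Λ, ∑ k ∈ Λ, relDist (c i) (c k)) := by
  calc ∑ t, ‖profile c Λ t‖ ^ 2
      = ∑ t, ∑ k ∈ Λ, ⟪profile c Λ t, simplexVec (c k t)⟫ := by
        simp only [← real_inner_self_eq_norm_sq, ← inner_sum]; rfl
    _ = ∑ k ∈ Λ, ∑ i ∈ Λ, n * (1 - 1 / (Fintype.card F : ℝ) - relDist (c i) (c k)) := by
        rw [sum_comm]; simp only [sum_inner_profile]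
    _ = _ := by
        rw [sum_comm]
        simp only [← mul_sum, sum_sub_distrib, sum_const, nsmul_eq_mul]
        ring

lemma le_sum_norm_profile_of_relDist_le [Nontrivial F] {n : ℕ} {c : ι → Fin n → F} {Λ : Finset ι}
    {w : Fin n → F} {ε : ℝ}
    (hw : ∀ i ∈ Λ, relDist (c i) w ≤ (1 - 1 / (Fintype.card F : ℝ)) * (1 - ε)) :
    n * (#Λ * (√(1 - 1 / (Fintype.card F : ℝ)) * ε)) ≤ ∑ t, ‖profile c Λ t‖ := by
  set Q : ℝ := 1 - 1 / (Fintype.card F : ℝ) with hQ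
  have hQ_pos : 0 < Q := by
    rw [hQ, sub_pos, div_lt_one (by simp [Fintype.card_pos])]
    exact_mod_cast Fintype.one_lt_card
  refine le_of_mul_le_mul_right ?_ (sqrt_pos.2 hQ_pos)
  calc n * (#Λ * (√Q * ε)) * √Q = ∑ i ∈ Λ, n * (Q - Q * (1 - ε)) := by
        rw [sum_const, nsmul_eq_mul]
        linear_combination n * #Λ * ε * mul_self_sqrt hQ_pos.le
    _ ≤ ∑ i ∈ Λ, n * (Q - relDist (c i) w) := by
        gcongr with i hi
        exact hw i hi
    _ = ∑ t, ⟪profile c Λ t, simplexVec (w t)⟫ := (sum_inner_profile c Λ w).symm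
    _ ≤ ∑ t, ‖profile c Λ t‖ * √Q := sum_le_sum fun t _ =>
        (real_inner_le_norm _ _).trans_eq (by rw [norm_simplexVec])
    _ = (∑ t, ‖profile c Λ t‖) * √Q := (sum_mul ..).symm

lemma sum_sum_eq_two_mul_sum_sum_lt {ι : Type*} [LinearOrder ι] {d : ι → ι → ℝ}
    (hd : ∀ i, d i i = 0) (hsymm : ∀ i k, d i k = d k i) (s : Finset ι) :
    ∑ i ∈ s, ∑ k ∈ s, d i k = 2 * ∑ i ∈ s, ∑ k ∈ s with i < k, d i k := by
  have trichotomy (i k : ι) :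
      d i k = (if i < k then d i k else 0) + if k < i then d k i else 0 := by
    rcases lt_trichotomy i k with h | rfl | h
    · simp [h, h.not_gt]
    · simp [hd]
    · simp [h, h.not_gt, hsymm i k]
  have swap : ∑ i ∈ s, ∑ k ∈ s, (if k < i then d k i else 0)
      = ∑ i ∈ s, ∑ k ∈ s, if i < k then d i k else 0 := sum_comm
  calc ∑ i ∈ s, ∑ k ∈ s, d i k
      = ∑ i ∈ s, ∑ k ∈ s, ((if i < k then d i k else 0) + if k < i then d k i else 0) :=
        sum_congr rfl fun i _ => sum_congr rfl fun k _ => trichotomy i k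
    _ = 2 * ∑ i ∈ s, ∑ k ∈ s with i < k, d i k := by
        simp only [sum_add_distrib, swap, sum_filter]
        ring

/-- The computation behind the Johnson bound. -/
lemma expect_norm_profile_sq_le [Nonempty F] [LinearOrder ι] {m : ℕ} (hm : m ≠ 0)
    {c : ι → Fin m → F} {Λ : Finset ι} (hΛ : 2 ≤ #Λ) {η : ℝ}
    (hd : (1 - 1 / (Fintype.card F : ℝ)) * (1 - η) ≤
      (1 / ((#Λ).choose 2) : ℝ) * ∑ i ∈ Λ, ∑ k ∈ Λ with i < k, relDist (c i) (c k)) :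
    𝔼 t, ‖profile c Λ t‖ ^ 2
      ≤ (1 - 1 / (Fintype.card F : ℝ)) * (#Λ ^ 2 * (1 / #Λ + η * (1 - 1 / #Λ))) := by
  have pairs := sum_sum_eq_two_mul_sum_sum_lt (d := fun i k => relDist (c i) (c k))
    (fun i => by simp [relDist]) (fun i k => by simp [relDist, hammingDist_comm]) Λ
  have hΛ' : (2 : ℝ) ≤ #Λ := by exact_mod_cast hΛ
  have hm' : (m : ℝ) ≠ 0 := by exact_mod_cast hm
  rw [Fintype.expect_eq_sum_div_card, Fintype.card_fin, sum_norm_profile_sq, pairs,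
    mul_div_cancel_left₀ _ hm']
  rw [Nat.cast_choose_two, one_div_mul_eq_div, le_div_iff₀ (by nlinarith)] at hd
  have expand : (#Λ : ℝ) ^ 2 * (1 / #Λ + η * (1 - 1 / #Λ)) = #Λ + η * (#Λ * (#Λ - 1)) := by
    field_simp
  rw [expand]
  linarith

end Profile

/-! ### List decoding of punctured codes -/

section ListDecoding

lemma half_le_sqrt_one_sub_one_div_card {F : Type*} [Fintype F] [Nontrivial F] :
    1 / 2 ≤ √(1 - 1 / (Fintype.card F : ℝ)) := by
  have card_ge : (2 : ℝ) ≤ Fintype.card F := by exact_mod_cast Fintype.one_lt_card (α := F)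
  have : 1 / (Fintype.card F : ℝ) ≤ 1 / 2 := by gcongr
  exact le_sqrt_of_sq_le (by linarith)

variable {F ι τ : Type*} [DecidableEq F] {L n : ℕ}

/-- The random puncturing of the code with codewords `c` that keeps the coordinates `T`. -/
def puncture (c : ι → τ → F) (T : Fin n → τ) (i : ι) (j : Fin n) : F := c i (T j)

/-- The code with codewords `c`, counted with multiplicity, is `(ρ, L)`-list decodable. -/
def IsListDecodable [Fintype ι] (c : ι → Fin n → F) (ρ : ℝ) (L : ℕ) : Prop :=
  ∀ w : Fin n → F, #{i | relDist (c i) w ≤ ρ} ≤ L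

lemma exists_list_of_not_isListDecodable [Fintype ι] {c : ι → Fin n → F} {ρ : ℝ}
    (hc : ¬ IsListDecodable c ρ (L - 1)) :
    ∃ (Λ : {Λ : Finset ι // #Λ = L}) (w : Fin n → F), ∀ i ∈ Λ.1, relDist (c i) w ≤ ρ := by
  simp only [IsListDecodable, not_forall, not_le] at hc
  obtain ⟨w, hw⟩ := hc
  obtain ⟨Λ, hΛ, hcard⟩ := exists_subset_card_eq (show L ≤ #{i | relDist (c i) w ≤ ρ} by omega)
  exact ⟨⟨Λ, hcard⟩, w, fun i hi => (mem_filter.1 (hΛ hi)).2⟩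

variable [Fintype F]

/-- The symbols of the words `c` at coordinate `t`, projected onto the sign vector of `σ`. -/
def signProjection (c : ι → τ → F) (σ : F → ℤˣ) (t : τ) (i : ι) : ℝ :=
  ⟪signVec σ, simplexVec (c i t)⟫

lemma listSum_signProjection (c : ι → τ → F) (σ : F → ℤˣ) (t : τ)
    (Λ : {Λ : Finset ι // #Λ = L}) :
    listSum L (signProjection c σ t) Λ = ⟪signVec σ, profile c Λ t⟫ := by
  rw [listSum_apply, profile, inner_sum]
  rfl

variable [Fintype τ]

/-- The samples contribute `√(1 - 1/q) * ε` per word after division by `√3 ≤ 20 / 11`, and the mean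
only half as much. -/
lemma le_expect_listDeviation_signProjection [Nontrivial F] {c : ι → τ → F} {T : Fin n → τ}
    {Λ : {Λ : Finset ι // #Λ = L}} {w : Fin n → F} {ε : ℝ} (hε : 0 ≤ ε)
    (hw : ∀ i ∈ Λ.1, relDist (puncture c T i) w ≤ (1 - 1 / (Fintype.card F : ℝ)) * (1 - ε))
    (moment : 𝔼 t, ‖profile c Λ t‖ ^ 2 ≤ (1 - 1 / (Fintype.card F : ℝ)) * (L * (ε / 2)) ^ 2) :
    n * (L * (ε / 40)) ≤ 𝔼 σ, listDeviation L (signProjection c σ) T Λ := by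
  have hQ := half_le_sqrt_one_sub_one_div_card (F := F)
  have samples := le_sum_norm_profile_of_relDist_le hw
  rw [Λ.2] at samples
  have mean : 𝔼 t, ‖profile c Λ t‖ ≤ √(1 - 1 / (Fintype.card F : ℝ)) * (L * (ε / 2)) := by
    rw [← sqrt_sq (show 0 ≤ L * (ε / 2) by positivity), ← sqrt_mul' _ (by positivity)]
    exact (expect_le_sqrt_expect_sq _).trans (sqrt_le_sqrt moment)
  set r := √(1 - 1 / (Fintype.card F : ℝ))
  have sqrt_three_le : √3 ≤ 20 / 11 := sqrt_le_iff.2 (by norm_num)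
  calc n * (L * (ε / 40)) = n * (L * (1 / 2 * ε)) * (1 / 20) := by ring
    _ ≤ n * (L * (r * ε)) * (1 / 20) := by gcongr
    _ = n * (L * (r * ε)) / (20 / 11) - n * (r * (L * (ε / 2))) := by ring
    _ ≤ (∑ j, ‖profile c Λ (T j)‖) / √3 - n * 𝔼 t, ‖profile c Λ t‖ := by
        gcongr
        exact samples
    _ ≤ 𝔼 σ, (∑ j, |⟪signVec σ, profile c Λ (T j)⟫| - n * 𝔼 t, |⟪signVec σ, profile c Λ t⟫|) :=
        sum_norm_div_sub_le_expect_sum_abs_inner_signVec (profile c Λ) T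
    _ = 𝔼 σ, listDeviation L (signProjection c σ) T Λ := by
        simp only [listDeviation_apply, listSum_signProjection]

lemma dens_not_isListDecodable_puncture_le [Nontrivial F] [Fintype ι] (hL : L ≠ 0) {c : ι → τ → F}
    {ε : ℝ} (hε : 0 ≤ ε)
    (moment : ∀ Λ : Finset ι, #Λ = L →
      𝔼 t, ‖profile c Λ t‖ ^ 2 ≤ (1 - 1 / (Fintype.card F : ℝ)) * (L * (ε / 2)) ^ 2) (n : ℕ) :
    (dens {T : Fin n → τ |
        ¬ IsListDecodable (puncture c T) ((1 - 1 / (Fintype.card F : ℝ)) * (1 - ε)) (L - 1)} : ℝ)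
      ≤ Fintype.card ι * exp (-(n * ε ^ 2 / 51200)) := by
  have deviation := dens_le_expect_listDeviation_le hL (x := signProjection c) (b := 2)
    (δ := ε / 40) two_pos (by positivity)
    (fun σ t i => abs_inner_signVec_simplexVec_le σ (c i t)) n
  rw [show n * (ε / 40) ^ 2 / (8 * 2 ^ 2) = n * ε ^ 2 / 51200 by ring] at deviation
  refine le_trans ?_ deviation
  refine NNRat.cast_le.2 (dens_le_dens ?_)
  refine monotone_filter_right _ fun T _ hT => ?_
  obtain ⟨Λ, w, hw⟩ := exists_list_of_not_isListDecodable hT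
  exact ⟨Λ, le_expect_listDeviation_signProjection hε hw (moment Λ Λ.2)⟩

end ListDecoding

lemma mul_exp_neg_le_one_div {N a : ℝ} (hN : 0 < N) (ha : 2 * log N ≤ a) :
    N * exp (-a) ≤ 1 / N := by
  calc N * exp (-a) ≤ N * exp (-(2 * log N)) := by gcongr
    _ = 1 / N := by
      rw [two_mul, neg_add, exp_add, exp_neg, exp_log hN]
      field_simp

/-- The constant `102400 = 2 * 51200` turns the failure probability `N * exp (-(n * ε ^ 2 / 51200))`
into `N * N ^ (-2)`. -/
theorem stmt14_general {F ι : Type*} [Fintype F] [DecidableEq F] [Nontrivial F] [Fintype ι]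
    [LinearOrder ι] [Nonempty ι] {L m : ℕ} (hL : 2 ≤ L) (hm : m ≠ 0) {η : ℝ} (hη : 0 ≤ η)
    {c : ι → Fin m → F}
    (hd : ∀ Λ : Finset ι, #Λ = L → (1 - 1 / (Fintype.card F : ℝ)) * (1 - η) ≤
      (1 / (L.choose 2) : ℝ) * ∑ i ∈ Λ, ∑ k ∈ Λ with i < k, relDist (c i) (c k))
    {ε : ℝ} (hε : ε = √(4 * (1 / L + η * (1 - 1 / L)))) {n : ℕ}
    (hn : 102400 * log (Fintype.card ι) / ε ^ 2 ≤ n) :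
    1 - 1 / (Fintype.card ι : ℝ) ≤
      (#{T : Fin n → Fin m | IsListDecodable (puncture c T)
        ((1 - 1 / (Fintype.card F : ℝ)) * (1 - ε)) (L - 1)} : ℝ) /
        Fintype.card (Fin n → Fin m) := by
  have : NeZero m := ⟨hm⟩
  rw [← nnratCast_dens]
  set N := (Fintype.card ι : ℝ)
  have hL_inv : 0 < 1 / (L : ℝ) ∧ 1 / (L : ℝ) ≤ 1 := by
    have : (2 : ℝ) ≤ L := by exact_mod_cast hL
    exact ⟨by positivity, (div_le_one (by positivity)).2 (by linarith)⟩
  have radicand_pos : 0 < 4 * (1 / L + η * (1 - 1 / L)) := by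
    nlinarith [mul_nonneg hη (sub_nonneg.2 hL_inv.2)]
  have hε_sq : ε ^ 2 = 4 * (1 / L + η * (1 - 1 / L)) := by rw [hε, sq_sqrt radicand_pos.le]
  have moment (Λ : Finset ι) (hΛ : #Λ = L) :
      𝔼 t, ‖profile c Λ t‖ ^ 2 ≤ (1 - 1 / (Fintype.card F : ℝ)) * (L * (ε / 2)) ^ 2 := by
    subst hΛ
    convert expect_norm_profile_sq_le hm hL (hd Λ rfl) using 2
    linear_combination (#Λ : ℝ) ^ 2 / 4 * hε_sq
  have failure := dens_not_isListDecodable_puncture_le (by omega) (hε ▸ sqrt_nonneg _) moment n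
  have success_add_failure := congrArg (NNRat.cast : ℚ≥0 → ℝ)
    (dens_filter_add_dens_filter_not_eq_dens (s := univ) fun T : Fin n → Fin m =>
      IsListDecodable (puncture c T) ((1 - 1 / (Fintype.card F : ℝ)) * (1 - ε)) (L - 1))
  rw [NNRat.cast_add, dens_univ, NNRat.cast_one] at success_add_failure
  have failure_le : N * exp (-(n * ε ^ 2 / 51200)) ≤ 1 / N := by
    rw [div_le_iff₀ (hε_sq ▸ radicand_pos)] at hn
    exact mul_exp_neg_le_one_div (by simp [N, Fintype.card_pos]) (by linarith)
  linarith

/-- there is an absolute constant `C' > 0` such that the following holds.  Let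
`C = {c_1, …, c_N} ⊆ F^{n'}` be a linear code over the field `F` with `q` elements (`q` a
prime power, `N ≥ 2`) satisfying, for every `Λ` of `L` indices,
`(1/binom(L,2))·Σ_{i<j ∈ Λ} d(c_i, c_j) ≥ (1 − 1/q)(1 − η)`.  Set
`ε = √(4(1/L + η(1 − 1/L)))`.  Then for every length `n ≥ C'·ln(N)/ε²`, the randomly
punctured code of length `n` (obtained by sampling the `n` coordinates `T = (t_1, …, t_n)`
independently and uniformly from `{1, …, n'}`) is `((1 − 1/q)(1 − ε), L − 1)`-list decodable
(as a multiset, i.e. counting codewords with multiplicity) with probability at least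
`1 − 1/N`. -/
theorem stmt14 :
    ∃ C' : ℝ, 0 < C' ∧
      ∀ (q L N n' : ℕ), 2 ≤ L → 2 ≤ N → 1 ≤ n' →
      ∀ (F : Type) [Field F] [Fintype F] [DecidableEq F], Fintype.card F = q →
      ∀ (η : ℝ), 0 ≤ η → η ≤ 1 →
      ∀ (c : Fin N → Fin n' → F), Function.Injective c →
        (∃ V : Submodule F (Fin n' → F), Set.range c = (V : Set (Fin n' → F))) →
        (∀ Λ : Finset (Fin N), Λ.card = L →
          (1 - 1 / (q : ℝ)) * (1 - η) ≤
            (1 / (L.choose 2) : ℝ) *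
              ∑ i ∈ Λ, ∑ j ∈ Λ.filter (fun j => i < j), relDist (c i) (c j)) →
      ∀ ε : ℝ, ε = Real.sqrt (4 * (1 / L + η * (1 - 1 / L))) →
      ∀ n : ℕ, C' * Real.log N / ε ^ 2 ≤ n →
        1 - 1 / (N : ℝ) ≤
          ((Finset.univ.filter fun T : Fin n → Fin n' =>
              ∀ w : Fin n → F,
                (Finset.univ.filter fun i : Fin N =>
                  relDist (fun j => c i (T j)) w ≤ (1 - 1 / (q : ℝ)) * (1 - ε)).card
                  ≤ L - 1).card : ℝ) /
            (Fintype.card (Fin n → Fin n') : ℝ) := by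
  refine ⟨102400, by norm_num, ?_⟩
  rintro _ L N m hL hN hm F _ _ _ rfl η hη - c - - hd ε hε n hn
  have : NeZero N := ⟨by omega⟩
  convert stmt14_general hL (by omega) hη hd hε (by simpa using hn)
  exacts [(Fintype.card_fin N).symm, Iff.rfl]
end
end

section
/- Let q ≥ 2, let C ⊆ F_q^n be a linear code, let δ ∈ [0,1], and let A be the number of codewords c ∈ C whose relative Hamming weight is at most δ. Then for every integer L ≥ 2 and every set Λ of L distinct codewords of C, (1/binom(L,2))·Σ_{i<j ∈ Λ} d(c_i, c_j) ≥ ((L − A)/(L − 1))·δ. -/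
/-!
An additive code looks the same from each of its codewords: translating by a codeword `c` carries
the codewords of relative weight at most `δ` onto those within distance `δ` of `c`, so there are `A`
of each. Hence at least `L - A` words of `Λ` are farther than `δ` from any given `c ∈ Λ`, and the
distances from `c` sum to at least `(L - A) * δ`. Averaging over `c ∈ Λ` gives the bound.
-/

open Finset
open scoped BigOperators Classical

noncomputable section

/-- The words of the code `C` at relative distance at most `δ` from `x`. For `x = 0` these are the
codewords of relative weight at most `δ`. -/
def codeBall {n : ℕ} {α : Type*} [DecidableEq α] (C : Set (Fin n → α)) (x : Fin n → α) (δ : ℝ) :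
    Set (Fin n → α) :=
  {c | c ∈ C ∧ relDist c x ≤ δ}

section FiniteSums

variable {ι : Type*} {s : Finset ι}

lemma card_sub_card_filter_le_mul_le_sum {R : Type*} [Ring R] [LinearOrder R]
    [IsOrderedAddMonoid R] {f : ι → R} (hf : ∀ i ∈ s, 0 ≤ f i) (δ : R) :
    ((#s : R) - #{i ∈ s | f i ≤ δ}) * δ ≤ ∑ i ∈ s, f i := by
  have hfar : (#s : R) - #{i ∈ s | f i ≤ δ} = #{i ∈ s | ¬ f i ≤ δ} := by
    rw [sub_eq_iff_eq_add', ← Nat.cast_add, card_filter_add_card_filter_not]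
  calc ((#s : R) - #{i ∈ s | f i ≤ δ}) * δ
      = #{i ∈ s | ¬ f i ≤ δ} • δ := by rw [hfar, nsmul_eq_mul]
    _ ≤ ∑ i ∈ s with ¬ f i ≤ δ, f i :=
        card_nsmul_le_sum _ _ _ fun _ hi => (not_le.mp (mem_filter.mp hi).2).le
    _ ≤ ∑ i ∈ s, f i :=
        sum_le_sum_of_subset_of_nonneg (filter_subset _ _) fun i hi _ => hf i hi

lemma div_card_sub_one_le_pair_average {K : Type*} [Field K] [LinearOrder K]
    [IsStrictOrderedRing K] {f : ι → ι → K} {B : K} (hs : 2 ≤ #s)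
    (hB : ∀ i ∈ s, B ≤ ∑ j ∈ s, f i j) :
    B / ((#s : K) - 1) ≤ 1 / ((#s).choose 2 : K) * ((∑ i ∈ s, ∑ j ∈ s, f i j) / 2) := by
  have hs' : (2 : K) ≤ #s := by exact_mod_cast hs
  have hs0 : (#s : K) ≠ 0 := by intro h; linarith
  have hs1 : (#s : K) - 1 ≠ 0 := by intro h; linarith
  have hsum : #s * B ≤ ∑ i ∈ s, ∑ j ∈ s, f i j := by
    simpa only [nsmul_eq_mul] using card_nsmul_le_sum s _ B hB
  calc B / ((#s : K) - 1)
      = 1 / ((#s).choose 2 : K) * (#s * B / 2) := by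
        rw [Nat.cast_choose_two]
        field_simp
    _ ≤ 1 / ((#s).choose 2 : K) * ((∑ i ∈ s, ∑ j ∈ s, f i j) / 2) := by gcongr

end FiniteSums

section Words

variable {n : ℕ} {α : Type*} [DecidableEq α]

lemma relDist_nonneg (x y : Fin n → α) : 0 ≤ relDist x y := by
  unfold relDist
  positivity

lemma relDist_comm (x y : Fin n → α) : relDist x y = relDist y x := by
  rw [relDist, relDist, hammingDist_comm]

lemma card_sub_ncard_codeBall_mul_le_sum_relDist {C : Set (Fin n → α)} {Λ : Finset (Fin n → α)}
    (hΛ : ↑Λ ⊆ C) {x : Fin n → α} {δ : ℝ} (hδ : 0 ≤ δ) (hfin : (codeBall C x δ).Finite) :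
    ((#Λ : ℝ) - (codeBall C x δ).ncard) * δ ≤ ∑ c ∈ Λ, relDist x c := by
  have hnear : #{c ∈ Λ | relDist x c ≤ δ} ≤ (codeBall C x δ).ncard := by
    rw [← Set.ncard_coe_finset]
    refine Set.ncard_le_ncard (fun c hc => ?_) hfin
    obtain ⟨hcΛ, hcx⟩ := mem_filter.mp hc
    exact ⟨hΛ hcΛ, relDist_comm x c ▸ hcx⟩
  calc ((#Λ : ℝ) - (codeBall C x δ).ncard) * δ
      ≤ ((#Λ : ℝ) - #{c ∈ Λ | relDist x c ≤ δ}) * δ := by gcongr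
    _ ≤ ∑ c ∈ Λ, relDist x c :=
        card_sub_card_filter_le_mul_le_sum (fun c _ => relDist_nonneg x c) δ

end Words

section AdditiveCodes

variable {n : ℕ} {G : Type*} [AddGroup G] [DecidableEq G]

lemma relDist_add_left (a x y : Fin n → G) : relDist (a + x) (a + y) = relDist x y :=
  congrArg (fun k : ℕ => (k : ℝ) / n)
    (hammingDist_comp (fun i => (a i + ·)) fun i => add_right_injective (a i))

lemma image_add_left_codeBall_zero (C : AddSubgroup (Fin n → G)) {c : Fin n → G} (hc : c ∈ C)
    (δ : ℝ) : (c + ·) '' codeBall (C : Set (Fin n → G)) 0 δ = codeBall C c δ := by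
  ext x
  have hdist : relDist (-c + x) 0 = relDist x c := by
    rw [← neg_add_cancel c, relDist_add_left]
  rw [Set.image_add_left, Set.mem_preimage]
  exact and_congr (C.add_mem_cancel_left (C.neg_mem hc)) (by rw [hdist])

theorem stmt15_general (C : AddSubgroup (Fin n → G)) {δ : ℝ} (hδ : 0 ≤ δ)
    (hfin : (codeBall (C : Set (Fin n → G)) 0 δ).Finite)
    {Λ : Finset (Fin n → G)} (hΛC : ↑Λ ⊆ (C : Set (Fin n → G))) (hΛ : 2 ≤ #Λ) :
    ((#Λ : ℝ) - (codeBall (C : Set (Fin n → G)) 0 δ).ncard) / ((#Λ : ℝ) - 1) * δ ≤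
      1 / ((#Λ).choose 2 : ℝ) * ((∑ c ∈ Λ, ∑ c' ∈ Λ, relDist c c') / 2) := by
  rw [div_mul_eq_mul_div]
  refine div_card_sub_one_le_pair_average hΛ fun c hc => ?_
  have hball := image_add_left_codeBall_zero C (hΛC hc) δ
  rw [← Set.ncard_image_of_injective _ (add_right_injective c), hball]
  exact card_sub_ncard_codeBall_mul_le_sum_relDist hΛC hδ (hball ▸ hfin.image _)

end AdditiveCodes

/-- let `C` be a linear code (an `F`-subspace `V` of `F^n`, where `F` is the
field with `q` elements, `q ≥ 2`), let `δ ∈ [0,1]`, and let `A` be the number of codewords of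
relative Hamming weight at most `δ`.  Then for every `L ≥ 2` and every set `Λ` of `L`
distinct codewords, the average pairwise relative distance
`(1/binom(L,2))·Σ_{i<j ∈ Λ} d(c_i, c_j)` (written via the symmetric double sum, divided
by `2`) is at least `((L − A)/(L − 1))·δ`. -/
theorem stmt15 (q n : ℕ) (hq : 2 ≤ q) (hn : 1 ≤ n)
    (F : Type) [Field F] [Fintype F] [DecidableEq F] (hF : Fintype.card F = q)
    (V : Submodule F (Fin n → F)) (δ : ℝ) (hδ0 : 0 ≤ δ) (hδ1 : δ ≤ 1)
    (A : ℕ) (hA : A = Nat.card {c : Fin n → F // c ∈ V ∧ relDist c 0 ≤ δ})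
    (L : ℕ) (hL : 2 ≤ L)
    (Λ : Finset (Fin n → F)) (hΛV : ↑Λ ⊆ (V : Set (Fin n → F))) (hΛL : Λ.card = L) :
    ((L : ℝ) - A) / ((L : ℝ) - 1) * δ ≤
      (1 / (L.choose 2) : ℝ) * ((∑ c ∈ Λ, ∑ c' ∈ Λ, relDist c c') / 2) := by
  subst hA hΛL
  exact stmt15_general V.toAddSubgroup hδ0 (Set.toFinite _) hΛV hL
end
end
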